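/- Let P_1, …, P_m ∈ ℤ[y]_0 be linearly independent over ℚ. Then there exist constants c, γ, C > 0 (depending only on P_1, …, P_m) such that for every finite field 𝔽_q whose characteristic is at least c and every subset A ⊆ 𝔽_q, one has |#{(x,y) ∈ 𝔽_q × 𝔽_q : x, x+P_1(y), …, x+P_m(y) ∈ A} − |A|^{m+1}/q^{m−1}| ≤ C·q^{2−(m+1)γ}. -/

import Mathlib

open Polynomial

namespace Pel
open Finset
open scoped BigOperators ComplexConjugate

section basics
variable {ι κ : Type*} [Fintype ι] [Fintype κ]

lemma cs_avg (a b : ι → ℂ) (ha : ∀ i, ‖a i‖ ≤ 1) :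
    ‖𝔼 i, a i * b i‖ ^ 2 ≤ 𝔼 i, ‖b i‖ ^ 2 := by
  rcases isEmpty_or_nonempty ι with h | h
  · simp
  have h1 : ‖𝔼 i, a i * b i‖ ≤ 𝔼 i, ‖a i‖ * ‖b i‖ := by
    refine (RCLike.norm_expect_le (K := ℝ)).trans (le_of_eq ?_)
    simp
  have h2 := expect_mul_sq_le_sq_mul_sq univ (fun i => ‖a i‖) (fun i => ‖b i‖)
  have h3 : 𝔼 i, ‖a i‖ ^ 2 ≤ 1 := by
    apply expect_le univ_nonempty
    intro i _
    have := ha i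
    have := norm_nonneg (a i)
    nlinarith
  have h4 : 0 ≤ 𝔼 i, ‖b i‖ ^ 2 := expect_nonneg fun i _ => by positivity
  have h5 : 0 ≤ ‖𝔼 i, a i * b i‖ := norm_nonneg _
  calc _ ≤ (𝔼 i, ‖a i‖ * ‖b i‖) ^ 2 := by gcongr
    _ ≤ _ := h2
    _ ≤ 1 * 𝔼 i, ‖b i‖ ^ 2 := by gcongr
    _ = _ := one_mul _

lemma norm_avg_le (f : ι → ℂ) : ‖𝔼 i, f i‖ ≤ 𝔼 i, ‖f i‖ := RCLike.norm_expect_le (K := ℝ)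

lemma norm_avg_le_one (f : ι → ℂ) (hf : ∀ i, ‖f i‖ ≤ 1) : ‖𝔼 i, f i‖ ≤ 1 := by
  rcases isEmpty_or_nonempty ι with h | h
  · simp
  exact (norm_avg_le f).trans (expect_le univ_nonempty fun i _ => hf i)

lemma pow_avg_le (f : ι → ℝ) (hf : ∀ i, 0 ≤ f i) {k : ℕ} (hk : k ≠ 0) :
    (𝔼 i, f i) ^ k ≤ 𝔼 i, f i ^ k := by
  rcases isEmpty_or_nonempty ι with h | h
  · simp [hk]
  have hc : (0 : ℝ) < Fintype.card ι := by exact_mod_cast Fintype.card_pos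
  have := Real.pow_arith_mean_le_arith_mean_pow univ (fun _ : ι => (Fintype.card ι : ℝ)⁻¹) f
    (fun i _ => by positivity) (by simp) (fun i _ => hf i) k
  simpa [Fintype.expect_eq_sum_div_card, ← mul_sum, div_eq_inv_mul] using this

lemma expect_prod_type {M : Type*} [AddCommMonoid M] [Module ℚ≥0 M] (f : ι → κ → M) :
    𝔼 p : ι × κ, f p.1 p.2 = 𝔼 i, 𝔼 j, f i j := by
  rw [← expect_product', univ_product_univ]

lemma avg_le_avg {f g : ι → ℝ} (h : ∀ i, f i ≤ g i) : 𝔼 i, f i ≤ 𝔼 i, g i :=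
  expect_le_expect fun i _ => h i

lemma conj_avg (f : ι → ℂ) : conj (𝔼 i, f i) = 𝔼 i, conj (f i) := by
  simp [Fintype.expect_eq_sum_div_card]

lemma ofReal_avg (f : ι → ℝ) : ((𝔼 i, f i : ℝ) : ℂ) = 𝔼 i, (f i : ℂ) := by
  simp [Fintype.expect_eq_sum_div_card]

lemma re_avg (f : ι → ℂ) : (𝔼 i, f i).re = 𝔼 i, (f i).re := by
  rw [Fintype.expect_eq_sum_div_card, Fintype.expect_eq_sum_div_card,
    ← Complex.re_sum, Complex.div_natCast_re]

/-- pick a good element -/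
lemma exists_avg_le [Nonempty ι] (f : ι → ℝ) : ∃ i, 𝔼 j, f j ≤ f i := by
  obtain ⟨i, -, h⟩ := exists_le_of_le_expect (univ_nonempty (α := ι)) (le_refl (𝔼 j, f j))
  exact ⟨i, h⟩

lemma normsq_avg (v : ι → ℂ) :
    ((‖𝔼 y, v y‖ ^ 2 : ℝ) : ℂ) = 𝔼 y, 𝔼 y', v y * conj (v y') := by
  rw [← expect_mul_expect, ← conj_avg, Complex.mul_conj, Complex.normSq_eq_norm_sq]

end basics

section shift
variable {F : Type} [Field F] [Fintype F]
variable {M : Type*} [AddCommMonoid M] [Module ℚ≥0 M]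

lemma avg_shift (a : F) (f : F → M) : 𝔼 x, f (x + a) = 𝔼 x, f x :=
  Fintype.expect_equiv (Equiv.addRight a) _ _ fun _ => rfl

lemma avg_shift' (a : F) (f : F → M) : 𝔼 x, f (x - a) = 𝔼 x, f x :=
  Fintype.expect_equiv (Equiv.subRight a) _ _ fun _ => rfl

lemma avg_scale (a : F) (ha : a ≠ 0) (f : F → M) : 𝔼 x, f (a * x) = 𝔼 x, f x :=
  Fintype.expect_equiv (Equiv.mulLeft₀ a ha) _ _ fun _ => rfl

lemma normsq_avg_shift (v : F → ℂ) :
    ((‖𝔼 y, v y‖ ^ 2 : ℝ) : ℂ) = 𝔼 h, 𝔼 y, v (y + h) * conj (v y) := by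
  rw [normsq_avg, expect_comm, expect_comm (s := univ) (t := univ) (f := fun h y => v (y + h) * conj (v y))]
  refine expect_congr rfl fun y _ => ?_
  rw [← avg_shift y]
  refine expect_congr rfl fun h _ => ?_
  rw [add_comm]

/-- difference operator -/
noncomputable def dl (h : F) (f : F → ℂ) : F → ℂ := fun x => f (x + h) * conj (f x)

/-- `g s f = ‖f‖_{U^{s+1}}^{2^{s+1}}` -/
noncomputable def g : ℕ → (F → ℂ) → ℝ
  | 0, f => ‖𝔼 x, f x‖ ^ 2
  | s + 1, f => 𝔼 h, g s (dl h f)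

lemma g_nonneg (s : ℕ) (f : F → ℂ) : 0 ≤ g s f := by
  induction s generalizing f with
  | zero => simp only [g]; positivity
  | succ s ih => simp only [g]; exact expect_nonneg fun h _ => ih _

/-- 1-bounded -/
def Bd {α : Type*} (f : α → ℂ) : Prop := ∀ x, ‖f x‖ ≤ 1

lemma mul_le_one' {a b : ℂ} (ha : ‖a‖ ≤ 1) (hb : ‖b‖ ≤ 1) : ‖a * b‖ ≤ 1 := by
  rw [norm_mul]; exact mul_le_one₀ ha (norm_nonneg _) hb

lemma dl_bd (h : F) {f : F → ℂ} (hf : Bd f) : Bd (dl h f) := by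
  intro x
  exact mul_le_one' (hf _) (by simpa using hf x)

lemma g_le_one (s : ℕ) {f : F → ℂ} (hf : Bd f) : g s f ≤ 1 := by
  induction s generalizing f with
  | zero => simp only [g]; exact pow_le_one₀ (norm_nonneg _) (norm_avg_le_one _ hf)
  | succ s ih => simp only [g]; exact expect_le univ_nonempty fun h _ => ih (dl_bd h hf)

lemma g_translate (s : ℕ) (a : F) (f : F → ℂ) : g s (fun x => f (x + a)) = g s f := by
  induction s generalizing f with
  | zero => simp only [g]; rw [avg_shift a f]
  | succ s ih =>
    simp only [g]
    refine expect_congr rfl fun h _ => ?_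
    rw [← ih (dl h f)]
    congr 1
    ext x
    simp only [dl]
    congr 2
    ring

lemma prod_bd {ι : Type*} [Fintype ι] (f : ι → ℂ) (hf : ∀ i, ‖f i‖ ≤ 1) : ‖∏ i, f i‖ ≤ 1 := by
  rw [norm_prod]; exact prod_le_one (fun i _ => norm_nonneg _) fun i _ => hf i

end shift
end Pel

namespace Pel
set_option linter.unusedSectionVars false
open Finset
open scoped BigOperators ComplexConjugate

section box
variable {F : Type} [Field F] [Fintype F]

lemma avg_cons {M : Type*} [AddCommMonoid M] [Module ℚ≥0 M] {s : ℕ} (f : (Fin (s + 1) → F) → M) :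
    𝔼 h, f h = 𝔼 a : F, 𝔼 r : Fin s → F, f (Fin.cons a r) := by
  rw [← expect_prod_type (fun a r => f (Fin.cons a r))]
  exact (Fintype.expect_equiv (Fin.consEquiv fun _ => F) _ _ fun _ => rfl).symm

noncomputable def box {Z : Type} [Fintype Z] : (s : ℕ) → (Z → (Fin s → F) → ℂ) → ℂ
  | 0, A => 𝔼 z, 𝔼 r, A z r
  | s + 1, A => 𝔼 a : F, 𝔼 a' : F,
      box s (fun z r => A z (Fin.cons a r) * conj (A z (Fin.cons a' r)))

def IsB : (s : ℕ) → ((Fin s → F) → ℂ) → Prop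
  | 0, B => ∀ r, B r = 1
  | s + 1, B => ∃ (b : (Fin s → F) → ℂ) (B' : F → (Fin s → F) → ℂ), Bd b ∧ (∀ a, IsB s (B' a)) ∧
      ∀ a r, B (Fin.cons a r) = b r * B' a r

def IsPsi : (s : ℕ) → ((Fin s → F) → F) → Prop
  | 0, B => ∀ r, B r = 0
  | s + 1, B => ∃ (b : (Fin s → F) → F) (B' : F → (Fin s → F) → F), (∀ a, IsPsi s (B' a)) ∧
      ∀ a r, B (Fin.cons a r) = b r + B' a r

lemma IsB.mul {s : ℕ} {B C : (Fin s → F) → ℂ} (hB : IsB s B) (hC : IsB s C) :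
    IsB s (fun r => B r * C r) := by
  induction s with
  | zero => intro r; simp [hB r, hC r]
  | succ s ih =>
    obtain ⟨b, B', h1, h2, h3⟩ := hB
    obtain ⟨c, C', k1, k2, k3⟩ := hC
    refine ⟨fun r => b r * c r, fun a r => B' a r * C' a r, fun r => mul_le_one' (h1 r) (k1 r),
      fun a => ih (h2 a) (k2 a), fun a r => ?_⟩
    simp only [h3, k3]; ring

lemma IsB.conj {s : ℕ} {B : (Fin s → F) → ℂ} (hB : IsB s B) :
    IsB s (fun r => conj (B r)) := by
  induction s with
  | zero => intro r; simp [hB r]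
  | succ s ih =>
    obtain ⟨b, B', h1, h2, h3⟩ := hB
    refine ⟨fun r => (starRingEnd ℂ) (b r), fun a r => (starRingEnd ℂ) (B' a r),
      fun r => by simpa using h1 r, fun a => ih (h2 a), fun a r => ?_⟩
    simp only [h3, map_mul]

lemma char_norm (χ : AddChar F ℂ) (x : F) : ‖χ x‖ = 1 := AddChar.norm_apply χ x

lemma char_mul_conj (χ : AddChar F ℂ) (x y : F) : χ x * conj (χ y) = χ (x - y) := by
  rw [← AddChar.map_neg_eq_conj, ← AddChar.map_add_eq_mul, sub_eq_add_neg]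

lemma IsPsi.isB (χ : AddChar F ℂ) {s : ℕ} {ψ : (Fin s → F) → F} (h : IsPsi s ψ) (k : F) :
    IsB s (fun r => χ (ψ r * k)) := by
  induction s with
  | zero => intro r; simp [h r]
  | succ s ih =>
    obtain ⟨b, B', h2, h3⟩ := h
    refine ⟨fun r => χ (b r * k), fun a r => χ (B' a r * k), fun r => (char_norm _ _).le,
      fun a => ih (h2 a), fun a r => ?_⟩
    simp only [h3, add_mul, AddChar.map_add_eq_mul]

lemma box_step {Z : Type} [Fintype Z] {s : ℕ} (A B : Z → (Fin (s + 1) → F) → ℂ)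
    (hB : ∀ z, IsB (s + 1) (B z)) :
    ∃ B' : Z → F → (Fin s → F) → ℂ, (∀ z a, IsB s (B' z a)) ∧
      ‖𝔼 z, 𝔼 h, A z h * B z h‖ ^ 2 ≤ 𝔼 a : F, 𝔼 a' : F, (𝔼 z, 𝔼 r,
        (A z (Fin.cons a r) * conj (A z (Fin.cons a' r))) * (B' z a r * conj (B' z a' r))).re := by
  choose b B' h1 h2 h3 using hB
  refine ⟨B', h2, ?_⟩
  have e1 : 𝔼 z, 𝔼 h, A z h * B z h =
      𝔼 p : Z × (Fin s → F), b p.1 p.2 * 𝔼 a : F, A p.1 (Fin.cons a p.2) * B' p.1 a p.2 := by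
    rw [expect_prod_type (fun z r => b z r * 𝔼 a : F, A z (Fin.cons a r) * B' z a r)]
    refine expect_congr rfl fun z _ => ?_
    rw [avg_cons, expect_comm]
    refine expect_congr rfl fun r _ => ?_
    rw [mul_expect]
    refine expect_congr rfl fun a _ => ?_
    rw [h3]; ring
  have e0 := cs_avg (fun p : Z × (Fin s → F) => b p.1 p.2)
    (fun p : Z × (Fin s → F) => 𝔼 a : F, A p.1 (Fin.cons a p.2) * B' p.1 a p.2)
    (fun p => h1 p.1 p.2)
  rw [← e1] at e0
  refine e0.trans (le_of_eq ?_)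
  have e2 : ∀ X : ℝ, ∀ Y : F → F → ℂ, (X : ℂ) = 𝔼 a, 𝔼 a', Y a a' →
      X = 𝔼 a, 𝔼 a', (Y a a').re := by
    intro X Y h
    rw [← Complex.ofReal_re X, h]
    simp only [re_avg]
  apply e2
  rw [ofReal_avg]
  simp only [normsq_avg]
  rw [expect_comm]
  refine expect_congr rfl fun a _ => ?_
  rw [expect_comm]
  refine expect_congr rfl fun a' _ => ?_
  rw [← expect_prod_type (fun z r => (A z (Fin.cons a r) * conj (A z (Fin.cons a' r))) *
    (B' z a r * conj (B' z a' r)))]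
  refine expect_congr rfl fun p _ => ?_
  rw [map_mul]; ring

lemma boxCS {Z : Type} [Fintype Z] {s : ℕ} (A B : Z → (Fin (s + 1) → F) → ℂ)
    (hB : ∀ z, IsB (s + 1) (B z)) :
    ‖𝔼 z, 𝔼 h, A z h * B z h‖ ^ (2 ^ (s + 1)) ≤ (box (s + 1) A).re := by
  induction s with
  | zero =>
    obtain ⟨B', h1, h2⟩ := box_step A B hB
    refine (by simpa using h2 : _ ≤ _).trans (le_of_eq ?_)
    simp only [box, re_avg]
    simp only [h1 _ _ _]
    simp
  | succ s ih =>
    obtain ⟨B', h1, h2⟩ := box_step A B hB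
    have h3 : ∀ a a' : F, ‖𝔼 z, 𝔼 r,
        (A z (Fin.cons a r) * conj (A z (Fin.cons a' r))) * (B' z a r * conj (B' z a' r))‖
          ^ (2 ^ (s + 1)) ≤
        (box (s + 1) (fun z r => A z (Fin.cons a r) * conj (A z (Fin.cons a' r)))).re :=
      fun a a' => ih _ _ fun z => (h1 z a).mul (h1 z a').conj
    rw [pow_succ' 2, pow_mul]
    have h4 : ‖𝔼 z, 𝔼 h, A z h * B z h‖ ^ 2 ≤ 𝔼 a : F, 𝔼 a' : F, ‖𝔼 z, 𝔼 r,
        (A z (Fin.cons a r) * conj (A z (Fin.cons a' r))) * (B' z a r * conj (B' z a' r))‖ :=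
      h2.trans (avg_le_avg fun a => avg_le_avg fun a' => Complex.re_le_norm _)
    calc _ ≤ _ := pow_le_pow_left₀ (by positivity) h4 _
      _ ≤ _ := pow_avg_le _ (fun a => expect_nonneg fun a' _ => norm_nonneg _) (by positivity)
      _ ≤ _ := avg_le_avg fun a => pow_avg_le _ (fun a => norm_nonneg _) (by positivity)
      _ ≤ _ := avg_le_avg fun a => avg_le_avg fun a' => h3 a a'
      _ = _ := by simp only [box, re_avg]

lemma box_sum (s : ℕ) (f : F → ℂ) :
    box (s + 1) (fun (x : F) (r : Fin (s + 1) → F) => f (x + ∑ i, r i)) = (g s f : ℂ) := by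
  induction s generalizing f with
  | zero =>
    simp only [box, g]
    rw [normsq_avg]
    simp only [Fin.sum_univ_succ, Fin.cons_zero, univ_eq_empty, sum_empty, add_zero,
      Fintype.expect_const]
    simp only [expect_comm (s := (univ : Finset F)) (t := (univ : Finset F)) 
      (f := fun a' x => f (x + _) * conj (f (x + a')))]
    rw [expect_comm]
    have : ∀ x : F, 𝔼 a, 𝔼 a', f (x + a) * conj (f (x + a')) = 𝔼 a, 𝔼 a', f a * conj (f a') := by
      intro x
      rw [← avg_shift x (fun a => 𝔼 a', f a * conj (f a'))]
      refine expect_congr rfl fun a _ => ?_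
      rw [← avg_shift x (fun a' => f (a + x) * conj (f a'))]
      simp only [add_comm x]
    simp only [this, Fintype.expect_const]
  | succ s ih =>
    rw [box]
    have e : ∀ a a' : F, box (s + 1) (fun (x : F) (r : Fin (s + 1) → F) =>
        f (x + ∑ i, (Fin.cons a r : Fin (s + 2) → F) i) *
          conj (f (x + ∑ i, (Fin.cons a' r : Fin (s + 2) → F) i))) =
        (g s (fun x => f (x + a) * conj (f (x + a'))) : ℂ) := by
      intro a a'
      rw [← ih]
      congr 1
      ext x r
      simp only [Fin.sum_univ_succ (n := s + 1), Fin.cons_zero, Fin.cons_succ]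
      congr 2
      · ring
      · congr 1; ring
    simp only [e]
    rw [g, ofReal_avg, expect_comm]
    have : ∀ a' : F, 𝔼 a : F, ((g s (fun x => f (x + a) * conj (f (x + a'))) : ℝ) : ℂ) =
        𝔼 a : F, ((g s (dl a f) : ℝ) : ℂ) := by
      intro a'
      rw [← avg_shift a']
      refine expect_congr rfl fun a _ => ?_
      rw [← g_translate s a' (dl a f)]
      congr 2
      ext x
      simp only [dl]
      congr 2
      ring
    simp only [this, Fintype.expect_const]

end box

section dlt
variable {F : Type} [Field F] [Fintype F]

noncomputable def Dl : (s : ℕ) → (Fin s → F) → (F → ℂ) → F → ℂ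
  | 0, _, f => f
  | s + 1, h, f => Dl s (Fin.tail h) (dl (h 0) f)

lemma g_add (t s : ℕ) (f : F → ℂ) : g (t + s) f = 𝔼 h : Fin s → F, g t (Dl s h f) := by
  induction s generalizing f with
  | zero => simp [Dl]
  | succ s ih =>
    rw [← add_assoc, g, avg_cons]
    simp only [ih, Dl, Fin.tail_cons, Fin.cons_zero]

lemma dl_comm (a b : F) (f : F → ℂ) : dl a (dl b f) = dl b (dl a f) := by
  ext x
  simp only [dl, map_mul, Complex.conj_conj]
  rw [add_right_comm]; ring

lemma dl_Dl (k : F) (s : ℕ) (h : Fin s → F) (f : F → ℂ) : dl k (Dl s h f) = Dl s h (dl k f) := by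
  induction s generalizing f with
  | zero => rfl
  | succ s ih => simp only [Dl, ih, dl_comm]

lemma Dl_bd {s : ℕ} (h : Fin s → F) {f : F → ℂ} (hf : Bd f) : Bd (Dl s h f) := by
  induction s generalizing f with
  | zero => exact hf
  | succ s ih => exact ih _ (dl_bd _ hf)

lemma Dl_decomp {s : ℕ} {f : F → ℂ} (hf : Bd f) :
    ∃ B : F → (Fin s → F) → ℂ, (∀ x, IsB s (B x)) ∧
      ∀ x h, Dl s h f x = f (x + ∑ i, h i) * B x h := by
  induction s generalizing f with
  | zero => exact ⟨fun _ _ => 1, fun _ _ => rfl, fun x h => by simp [Dl]⟩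
  | succ s ih =>
    choose B h1 h2 using fun a : F => ih (dl_bd a hf)
    refine ⟨fun x h => conj (f (x + ∑ i, Fin.tail h i)) * B (h 0) x (Fin.tail h), fun x => ?_, ?_⟩
    · refine ⟨fun r => conj (f (x + ∑ i, r i)), fun a r => B a x r, fun r => by simpa using hf _,
        fun a => h1 a x, fun a r => by simp⟩
    · intro x h
      simp only [Dl, h2, dl, Fin.sum_univ_succ, Fin.tail]
      rw [← mul_assoc]
      congr 3
      ring

lemma stepII (χ : AddChar F ℂ) {s : ℕ} {ψ : (Fin (s + 1) → F) → F} (hψ : IsPsi (s + 1) ψ)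
    {D : F → ℂ} (hD : Bd D) :
    (𝔼 h, ‖𝔼 x, Dl (s + 1) h D x * χ (ψ h * x)‖ ^ 2) ^ (2 ^ (s + 1)) ≤ g (s + 1) D := by
  have e1 : 𝔼 h, ‖𝔼 x, Dl (s + 1) h D x * χ (ψ h * x)‖ ^ 2 ≤
      𝔼 k : F, ‖𝔼 x, 𝔼 h, Dl (s + 1) h (dl k D) x * χ (ψ h * k)‖ := by
    have : ((𝔼 h, ‖𝔼 x, Dl (s + 1) h D x * χ (ψ h * x)‖ ^ 2 : ℝ) : ℂ) =
      𝔼 k : F, 𝔼 x, 𝔼 h, Dl (s + 1) h (dl k D) x * χ (ψ h * k) := by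
      rw [ofReal_avg]
      simp only [normsq_avg_shift]
      rw [expect_comm]
      refine expect_congr rfl fun k _ => ?_
      rw [expect_comm]
      refine expect_congr rfl fun x _ => expect_congr rfl fun h _ => ?_
      rw [← dl_Dl, dl]
      have : χ (ψ h * k) = χ (ψ h * (x + k)) * conj (χ (ψ h * x)) := by
        rw [char_mul_conj]; congr 1; ring
      rw [this, map_mul (starRingEnd ℂ)]; ring
    rw [← Complex.ofReal_re (𝔼 h, _), this]
    exact (Complex.re_le_norm _).trans (norm_avg_le _)
  calc _ ≤ _ := pow_le_pow_left₀ (expect_nonneg fun h _ => by positivity) e1 _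
    _ ≤ _ := pow_avg_le _ (fun k => norm_nonneg _) (by positivity)
    _ ≤ _ := avg_le_avg (g := fun k => g s (dl k D)) fun k => ?_
    _ = _ := by rw [g]
  obtain ⟨B, h1, h2⟩ := Dl_decomp (s := s + 1) (dl_bd k hD)
  have := boxCS (fun x h => dl k D (x + ∑ i, h i)) (fun x h => B x h * χ (ψ h * k))
    (fun x => (h1 x).mul (hψ.isB χ k))
  rw [box_sum] at this
  simpa only [h2, mul_assoc, Complex.ofReal_re] using this

end dlt
end Pel

namespace Pel
set_option linter.unusedSectionVars false
open Finset
open scoped BigOperators ComplexConjugate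

section fourier
variable {F : Type} [Field F] [Fintype F]

open Classical in
lemma char_avg {χ : AddChar F ℂ} (hχ : χ.IsPrimitive) (a : F) :
    𝔼 x, χ (a * x) = if a = 0 then 1 else 0 := by
  have := AddChar.sum_mulShift a hχ
  simp only [mul_comm _ a] at this
  rw [Fintype.expect_eq_sum_div_card, this]
  split_ifs <;> simp

lemma parseval {χ : AddChar F ℂ} (hχ : χ.IsPrimitive) (f : F → ℂ) :
    ∑ a, ‖𝔼 x, f x * χ (a * x)‖ ^ 2 = 𝔼 x, ‖f x‖ ^ 2 := by
  classical
  apply Complex.ofReal_injective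
  rw [ofReal_avg, Complex.ofReal_sum]
  simp only [normsq_avg]
  rw [← Fintype.card_mul_expect, expect_comm, mul_expect]
  refine expect_congr rfl fun x _ => ?_
  rw [expect_comm, mul_expect]
  have : ∀ y : F, 𝔼 a, f x * χ (a * x) * conj (f y * χ (a * y)) =
      if x = y then f x * conj (f y) else 0 := by
    intro y
    have h1 : ∀ a : F, f x * χ (a * x) * conj (f y * χ (a * y)) =
        (f x * conj (f y)) * χ ((x - y) * a) := by
      intro a
      have : χ ((x - y) * a) = χ (a * x) * conj (χ (a * y)) := by
        rw [char_mul_conj]; congr 1; ring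
      rw [this, map_mul (starRingEnd ℂ)]; ring
    simp only [h1]
    rw [← mul_expect, char_avg hχ]
    simp only [sub_eq_zero]
    split_ifs <;> simp
  simp only [this]
  rw [← mul_expect, Fintype.card_mul_expect]
  simp [Complex.mul_conj, Complex.normSq_eq_norm_sq]

lemma exists_fourier {χ : AddChar F ℂ} (hχ : χ.IsPrimitive) {f : F → ℂ} (hf : Bd f) :
    ∃ a, g 1 f ≤ ‖𝔼 x, f x * χ (a * x)‖ ^ 2 := by
  obtain ⟨a, -, ha⟩ := exists_max_image univ (fun a => ‖𝔼 x, f x * χ (a * x)‖ ^ 2) univ_nonempty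
  refine ⟨a, ?_⟩
  have h1 : g 1 f = ∑ a, (‖𝔼 x, f x * χ (a * x)‖ ^ 2) ^ 2 := by
    have := parseval hχ (fun h => 𝔼 x, dl h f x)
    simp only [g]
    rw [← this]
    refine sum_congr rfl fun a _ => ?_
    congr 1
    have e : 𝔼 h, (𝔼 x, dl h f x) * χ (a * h) = ((‖𝔼 x, f x * χ (a * x)‖ ^ 2 : ℝ) : ℂ) := by
      rw [normsq_avg_shift]
      refine expect_congr rfl fun h _ => ?_
      rw [expect_mul]
      refine expect_congr rfl fun x _ => ?_
      have : χ (a * h) = χ (a * (x + h)) * conj (χ (a * x)) := by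
        rw [char_mul_conj]; congr 1; ring
      rw [this, map_mul (starRingEnd ℂ), dl]; ring
    rw [e, Complex.norm_real, Real.norm_of_nonneg (by positivity)]
  rw [h1]
  calc _ ≤ ∑ b, ‖𝔼 x, f x * χ (a * x)‖ ^ 2 * ‖𝔼 x, f x * χ (b * x)‖ ^ 2 := by
        refine sum_le_sum fun b _ => ?_
        rw [sq (‖𝔼 x, f x * χ (b * x)‖ ^ 2)]
        exact mul_le_mul_of_nonneg_right (ha b (mem_univ _)) (by positivity)
    _ = ‖𝔼 x, f x * χ (a * x)‖ ^ 2 * 𝔼 x, ‖f x‖ ^ 2 := by rw [← mul_sum, parseval hχ]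
    _ ≤ ‖𝔼 x, f x * χ (a * x)‖ ^ 2 * 1 := by
        refine mul_le_mul_of_nonneg_left ?_ (by positivity)
        exact expect_le univ_nonempty fun x _ => pow_le_one₀ (norm_nonneg _) (hf x)
    _ = _ := mul_one _

open Classical in
lemma stepI (χ : AddChar F ℂ) (𝒞 : Set (F → F → ℂ)) (ε : ℝ)
    (hmul : ∀ K ∈ 𝒞, ∀ K' ∈ 𝒞, (fun y x => K y x * conj (K' y x)) ∈ 𝒞)
    (hbd : ∀ K ∈ 𝒞, ∀ y x, ‖K y x‖ ≤ 1) (hε : 0 ≤ ε)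
    (hsm : ∀ K ∈ 𝒞, ∀ a : F, a ≠ 0 → ‖𝔼 z : F × F, χ (a * z.1) * K z.2 z.1‖ ≤ ε)
    (s : ℕ) (c : (Fin s → F) → ℂ) (hc : Bd c) (φ : (Fin s → F) → F)
    (K : (Fin s → F) → F → F → ℂ) (hK : ∀ r, K r ∈ 𝒞) :
    ∃ ψ, IsPsi s ψ ∧
      ‖box s (fun (z : F × F) r => c r * (χ (φ r * z.1) * K r z.2 z.1))‖ ≤
        (𝔼 r, if φ r = ψ r then ‖c r‖ else 0) + ε := by
  induction s with
  | zero =>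
    refine ⟨fun _ => 0, fun _ => rfl, ?_⟩
    rw [box, expect_comm]
    refine (norm_avg_le _).trans ?_
    rw [← Fintype.expect_const (ι := Fin 0 → F) ε, ← expect_add_distrib]
    refine avg_le_avg fun r => ?_
    rw [← mul_expect, norm_mul]
    split_ifs with h
    · have : ‖𝔼 z : F × F, χ (φ r * z.1) * K r z.2 z.1‖ ≤ 1 :=
        norm_avg_le_one _ fun z => mul_le_one' (char_norm _ _).le (hbd _ (hK r) _ _)
      nlinarith [norm_nonneg (c r)]
    · have := hsm (K r) (hK r) (φ r) h
      have h2 := hc r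
      nlinarith [norm_nonneg (c r), norm_nonneg (𝔼 z : F × F, χ (φ r * z.1) * K r z.2 z.1)]
  | succ s ih =>
    have key : ∀ a' a : F, ∃ ψ, IsPsi s ψ ∧
        ‖box s (fun (z : F × F) r => c (Fin.cons a r) * (χ (φ (Fin.cons a r) * z.1) *
            K (Fin.cons a r) z.2 z.1) * conj (c (Fin.cons a' r) * (χ (φ (Fin.cons a' r) * z.1) *
            K (Fin.cons a' r) z.2 z.1)))‖ ≤
        (𝔼 r, if φ (Fin.cons a r) = φ (Fin.cons a' r) + ψ r then ‖c (Fin.cons a r)‖ else 0) + ε := by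
      intro a' a
      obtain ⟨ψ, h1, h2⟩ := ih (fun r => c (Fin.cons a r) * conj (c (Fin.cons a' r)))
        (fun r => mul_le_one' (hc _) (by simpa using hc _))
        (fun r => φ (Fin.cons a r) - φ (Fin.cons a' r))
        (fun r y x => K (Fin.cons a r) y x * conj (K (Fin.cons a' r) y x))
        (fun r => hmul _ (hK _) _ (hK _))
      refine ⟨ψ, h1, ?_⟩
      have e : (fun (z : F × F) r => c (Fin.cons a r) * (χ (φ (Fin.cons a r) * z.1) *
            K (Fin.cons a r) z.2 z.1) * conj (c (Fin.cons a' r) * (χ (φ (Fin.cons a' r) * z.1) *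
            K (Fin.cons a' r) z.2 z.1))) = fun (z : F × F) (r : Fin s → F) =>
            (c (Fin.cons a r) * conj (c (Fin.cons a' r))) *
            (χ ((φ (Fin.cons a r) - φ (Fin.cons a' r)) * z.1) *
            (K (Fin.cons a r) z.2 z.1 * conj (K (Fin.cons a' r) z.2 z.1))) := by
        ext z r
        rw [sub_mul, ← char_mul_conj, map_mul (starRingEnd ℂ), map_mul (starRingEnd ℂ)]
        ring
      rw [e]
      refine h2.trans ?_
      gcongr with r _
      simp only [sub_eq_iff_eq_add, add_comm (ψ r)]
      split_ifs
      · rw [norm_mul]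
        have : ‖conj (c (Fin.cons a' r))‖ ≤ 1 := by simpa using hc _
        nlinarith [norm_nonneg (c (Fin.cons a r))]
      · exact le_rfl
    choose ψ h1 h2 using key
    obtain ⟨a', ha'⟩ := exists_avg_le (fun a' => 𝔼 a, ‖box s (fun (z : F × F) r =>
            c (Fin.cons a r) * (χ (φ (Fin.cons a r) * z.1) *
            K (Fin.cons a r) z.2 z.1) * conj (c (Fin.cons a' r) * (χ (φ (Fin.cons a' r) * z.1) *
            K (Fin.cons a' r) z.2 z.1)))‖)
    refine ⟨fun h => φ (Fin.cons a' (Fin.tail h)) + ψ a' (h 0) (Fin.tail h),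
      ⟨fun r => φ (Fin.cons a' r), fun a r => ψ a' a r, fun a => h1 a' a, fun a r => by simp⟩, ?_⟩
    rw [box]
    refine (norm_avg_le _).trans ?_
    refine (avg_le_avg fun a => norm_avg_le _).trans ?_
    rw [expect_comm]
    refine ha'.trans ?_
    rw [avg_cons, ← Fintype.expect_const (ι := F) ε, ← expect_add_distrib]
    refine avg_le_avg fun a => ?_
    simpa using h2 a' a

/-- degree lowering, one step -/
lemma degree_lower {χ : AddChar F ℂ} (hχ : χ.IsPrimitive) (𝒞 : Set (F → F → ℂ)) (ε : ℝ)
    (hmul : ∀ K ∈ 𝒞, ∀ K' ∈ 𝒞, (fun y x => K y x * conj (K' y x)) ∈ 𝒞)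
    (hbd : ∀ K ∈ 𝒞, ∀ y x, ‖K y x‖ ≤ 1) (hε : 0 ≤ ε) (hε1 : ε ≤ 1)
    (hsm : ∀ K ∈ 𝒞, ∀ a : F, a ≠ 0 → ‖𝔼 z : F × F, χ (a * z.1) * K z.2 z.1‖ ≤ ε)
    (G : F → F → ℂ) (hG : ∀ t, (fun y x => G y (x + t)) ∈ 𝒞) (D : F → ℂ)
    (hDG : ∀ x, D x = 𝔼 y, G y x) (s : ℕ) :
    (g (s + 2) D) ^ (2 ^ (s + 1) * 2 ^ (s + 2)) ≤ 2 ^ 2 ^ (s + 2) * (g (s + 1) D + ε) := by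
  classical
  have hD : Bd D := by
    intro x
    rw [hDG]
    refine norm_avg_le_one _ fun y => ?_
    simpa using hbd _ (hG x) y 0
  choose φ hφ using fun h : Fin (s + 1) → F => exists_fourier hχ (Dl_bd h hD)
  set I : (Fin (s + 1) → F) → ℂ := fun h => 𝔼 x, Dl (s + 1) h D x * χ (φ h * x) with hI
  have hIb : Bd I := fun h => norm_avg_le_one _ fun x =>
    mul_le_one' (Dl_bd h hD x) (char_norm _ _).le
  have h1 : g (s + 2) D ≤ 𝔼 h, ‖I h‖ ^ 2 := by
    rw [show s + 2 = 1 + (s + 1) by ring, g_add]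
    exact avg_le_avg hφ
  obtain ⟨B, hB1, hB2⟩ := Dl_decomp (s := s + 1) hD
  have h2 : ((𝔼 h, ‖I h‖ ^ 2 : ℝ) : ℂ) = 𝔼 z : F × F, 𝔼 h,
      (conj (I h) * (χ (φ h * z.1) * G z.2 (z.1 + ∑ i, h i))) * B z.1 h := by
    rw [ofReal_avg, expect_comm]
    refine expect_congr rfl fun h _ => ?_
    have : ((‖I h‖ ^ 2 : ℝ) : ℂ) = conj (I h) * I h := by
      rw [mul_comm, Complex.mul_conj, Complex.normSq_eq_norm_sq]
    rw [this]
    nth_rewrite 2 [hI]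
    rw [expect_prod_type (fun x y => (conj (I h) * (χ (φ h * x) * G y (x + ∑ i, h i))) * B x h)]
    simp only [mul_expect]
    refine expect_congr rfl fun x _ => ?_
    rw [hB2, hDG]
    simp only [expect_mul, mul_expect]
    refine expect_congr rfl fun y _ => ?_
    ring
  have h3 := boxCS (fun (z : F × F) h => conj (I h) * (χ (φ h * z.1) * G z.2 (z.1 + ∑ i, h i)))
    (fun z h => B z.1 h) (fun z => hB1 z.1)
  rw [← h2, Complex.norm_real, Real.norm_of_nonneg (expect_nonneg fun h _ => by positivity)] at h3
  obtain ⟨ψ, hψ1, hψ2⟩ := stepI χ 𝒞 ε hmul hbd hε hsm (s + 1) (fun h => conj (I h))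
    (fun h => by simpa using hIb h) φ (fun h y x => G y (x + ∑ i, h i)) (fun h => hG _)
  have h4 := h3.trans ((Complex.re_le_norm _).trans hψ2)
  set Y : ℝ := 𝔼 r, if φ r = ψ r then ‖conj (I r)‖ else 0 with hY
  have hY0 : 0 ≤ Y := expect_nonneg fun r _ => by positivity
  have h5 : Y ^ 2 ≤ 𝔼 h, ‖𝔼 x, Dl (s + 1) h D x * χ (ψ h * x)‖ ^ 2 := by
    refine (pow_avg_le _ (fun r => by positivity) two_ne_zero).trans (avg_le_avg fun r => ?_)
    split_ifs with h
    · rw [← h]; simp [hI]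
    · simp only [ne_eq, OfNat.ofNat_ne_zero, not_false_eq_true, zero_pow]; positivity
  have h6 : Y ^ 2 ^ (s + 2) ≤ g (s + 1) D := by
    refine le_trans ?_ (stepII χ hψ1 hD)
    rw [pow_succ' 2 (s + 1), pow_mul]
    exact pow_le_pow_left₀ (by positivity) h5 _
  have h7 : g (s + 2) D ^ 2 ^ (s + 1) ≤ Y + ε :=
    (pow_le_pow_left₀ (g_nonneg _ _) h1 _).trans h4
  rw [pow_mul]
  calc _ ≤ (Y + ε) ^ 2 ^ (s + 2) := pow_le_pow_left₀ (pow_nonneg (g_nonneg _ _) _) h7 _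
    _ ≤ 2 ^ (2 ^ (s + 2) - 1) * (Y ^ 2 ^ (s + 2) + ε ^ 2 ^ (s + 2)) := add_pow_le hY0 hε _
    _ ≤ 2 ^ (2 ^ (s + 2)) * (g (s + 1) D + ε) := by
        have h8 : ε ^ 2 ^ (s + 2) ≤ ε := pow_le_of_le_one hε hε1 (by positivity)
        gcongr
        · norm_num
        · exact Nat.sub_le _ _

/-- iterated degree lowering down to the `U²`-norm -/
lemma degree_lower_iter (s : ℕ) : ∃ (K : ℕ) (C : ℝ), 1 ≤ K ∧ 0 ≤ C ∧
    ∀ (F : Type) [Field F] [Fintype F] (χ : AddChar F ℂ) (_ : χ.IsPrimitive)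
    (𝒞 : Set (F → F → ℂ)) (ε : ℝ)
    (_ : ∀ K ∈ 𝒞, ∀ K' ∈ 𝒞, (fun y x => K y x * conj (K' y x)) ∈ 𝒞)
    (_ : ∀ K ∈ 𝒞, ∀ y x, ‖K y x‖ ≤ 1) (_ : 0 ≤ ε) (_ : ε ≤ 1)
    (_ : ∀ K ∈ 𝒞, ∀ a : F, a ≠ 0 → ‖𝔼 z : F × F, χ (a * z.1) * K z.2 z.1‖ ≤ ε)
    (G : F → F → ℂ) (_ : ∀ t, (fun y x => G y (x + t)) ∈ 𝒞) (D : F → ℂ)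
    (_ : ∀ x, D x = 𝔼 y, G y x), (g (s + 1) D) ^ K ≤ C * (g 1 D + ε) := by
  induction s with
  | zero =>
    refine ⟨1, 1, le_rfl, zero_le_one, ?_⟩
    intro F _ _ χ hχ 𝒞 ε h1 h2 h3 h4 h5 G h6 D h7
    simp only [zero_add, pow_one, one_mul]
    linarith
  | succ s ih =>
    obtain ⟨K, C, hK, hC, H⟩ := ih
    refine ⟨2 ^ (s + 1) * 2 ^ (s + 2) * K, (2 ^ 2 ^ (s + 2)) ^ K * (2 ^ K * (C + 1)), ?_, by positivity, ?_⟩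
    · exact Nat.one_le_iff_ne_zero.mpr (by positivity)
    intro F _ _ χ hχ 𝒞 ε h1 h2 h3 h4 h5 G h6 D h7
    have a1 := degree_lower hχ 𝒞 ε h1 h2 h3 h4 h5 G h6 D h7 s
    have a2 := H F χ hχ 𝒞 ε h1 h2 h3 h4 h5 G h6 D h7
    have g0 := g_nonneg (s + 1) D
    have g1 := g_nonneg 1 D
    rw [pow_mul]
    calc _ ≤ _ := pow_le_pow_left₀ (pow_nonneg (g_nonneg _ _) _) a1 K
      _ = (2 ^ 2 ^ (s + 2)) ^ K * (g (s + 1) D + ε) ^ K := by rw [mul_pow]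
      _ ≤ (2 ^ 2 ^ (s + 2)) ^ K * (2 ^ (K - 1) * (g (s + 1) D ^ K + ε ^ K)) := by
          gcongr; exact add_pow_le g0 h3 _
      _ ≤ (2 ^ 2 ^ (s + 2)) ^ K * (2 ^ K * (C * (g 1 D + ε) + (g 1 D + ε))) := by
          have h8 : ε ^ K ≤ g 1 D + ε := (pow_le_of_le_one h3 h4 (by omega)).trans (by linarith)
          gcongr
          · norm_num
          · omega
      _ = _ := by ring
end fourier
end Pel

namespace Pel
set_option linter.unusedSectionVars false
open Finset
open scoped BigOperators ComplexConjugate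

section poly
variable {F : Type} [Field F]

/-- the characteristic is larger than `d` -/
def Ch (F : Type) [Field F] (d : ℕ) : Prop := ∀ k : ℕ, 1 ≤ k → k ≤ d → (k : F) ≠ 0

lemma Ch.mono {d e : ℕ} (h : Ch F d) (hed : e ≤ d) : Ch F e := fun k h1 h2 => h k h1 (h2.trans hed)

lemma taylor_coeff_top {d : ℕ} {P : F[X]} (hP : P.natDegree ≤ d) (h : F) :
    (taylor h P).coeff d = P.coeff d := by
  rw [taylor_coeff, eval_eq_sum_range' (n := 1)]
  · simp [hasseDeriv_coeff]
  · have := natDegree_hasseDeriv_le P d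
    omega

lemma taylor_coeff_sub {d : ℕ} {P : F[X]} (hP : P.natDegree ≤ d + 1) (h : F) :
    (taylor h P).coeff d = P.coeff d + (d + 1 : ℕ) * h * P.coeff (d + 1) := by
  rw [taylor_coeff, eval_eq_sum_range' (n := 2)]
  · simp only [hasseDeriv_coeff, sum_range_succ, range_zero, sum_empty]
    simp [add_comm 1 d, Nat.choose_succ_self_right]
    ring
  · have := natDegree_hasseDeriv_le P d
    omega

lemma natDegree_le_pred {d : ℕ} {P : F[X]} (hP : P.natDegree ≤ d + 1) (h : P.coeff (d + 1) = 0) :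
    P.natDegree ≤ d := by
  rw [natDegree_le_iff_coeff_eq_zero] at hP ⊢
  intro N hN
  rcases Nat.lt_or_ge (d + 1) N with h1 | h1
  · exact hP N h1
  · rw [show N = d + 1 by omega]; exact h

lemma natDegree_eq_of {d : ℕ} {P : F[X]} (hP : P.natDegree ≤ d) (h : P.coeff d ≠ 0) :
    P.natDegree = d := le_antisymm hP (le_natDegree_of_ne_zero h)

lemma natDegree_taylor_sub {d : ℕ} (hd : Ch F (d + 1)) {P : F[X]} (hP : P.natDegree = d + 1) {h : F}
    (hh : h ≠ 0) : (taylor h P - P).natDegree = d := by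
  have h1 : (taylor h P - P).natDegree ≤ d + 1 :=
    (natDegree_sub_le _ _).trans (by simp [natDegree_taylor, hP])
  refine natDegree_eq_of (natDegree_le_pred h1 ?_) ?_
  · rw [coeff_sub, taylor_coeff_top hP.le, sub_self]
  · rw [coeff_sub, taylor_coeff_sub hP.le, add_sub_cancel_left]
    refine mul_ne_zero (mul_ne_zero (hd _ (by omega) le_rfl) hh) ?_
    rw [← hP]
    simpa using (show P ≠ 0 by rintro rfl; simp at hP)

end poly

section weyl
variable {F : Type} [Field F] [Fintype F]

lemma avg_bad (f : F → ℝ) (B : Finset F) {c : ℝ} (hc : 0 ≤ c) (h1 : ∀ h, f h ≤ 1)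
    (h2 : ∀ h ∉ B, f h ≤ c) : 𝔼 h, f h ≤ c + B.card / Fintype.card F := by
  classical
  have h3 : 𝔼 h, f h ≤ 𝔼 h : F, (c + if h ∈ B then 1 else 0) := by
    refine avg_le_avg fun h => ?_
    split_ifs with hb
    · have := h1 h; linarith
    · have := h2 h hb; linarith
  refine h3.trans (le_of_eq ?_)
  rw [expect_add_distrib, Fintype.expect_const]
  congr 1
  rw [Fintype.expect_eq_sum_div_card]
  simp

lemma weyl_step (χ : AddChar F ℂ) (Q : F[X]) :
    ‖𝔼 y, χ (Q.eval y)‖ ^ 2 ≤ 𝔼 h, ‖𝔼 y, χ ((taylor h Q - Q).eval y)‖ := by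
  have h1 := normsq_avg_shift (fun y => χ (Q.eval y))
  have h2 : ‖𝔼 y, χ (Q.eval y)‖ ^ 2 = ‖(((‖𝔼 y, χ (Q.eval y)‖ ^ 2 : ℝ)) : ℂ)‖ := by
    rw [Complex.norm_real, Real.norm_of_nonneg (by positivity)]
  rw [h2, h1]
  refine (norm_avg_le _).trans (le_of_eq ?_)
  refine expect_congr rfl fun h _ => ?_
  congr 1
  refine expect_congr rfl fun y _ => ?_
  rw [char_mul_conj, eval_sub, taylor_eval]

lemma weyl (e : ℕ) : ∃ (K : ℕ) (C : ℝ), 1 ≤ K ∧ 0 ≤ C ∧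
    ∀ (F : Type) [Field F] [Fintype F] (χ : AddChar F ℂ) (_ : χ.IsPrimitive) (_ : Ch F (e + 1))
      (Q : F[X]) (_ : Q.natDegree = e + 1),
      ‖𝔼 y, χ (Q.eval y)‖ ^ K ≤ C / Fintype.card F := by
  induction e with
  | zero =>
    refine ⟨1, 0, le_rfl, le_rfl, ?_⟩
    intro F _ _ χ hχ _ Q hQ
    simp only [zero_add] at hQ
    obtain ⟨a, ha, b, rfl⟩ := natDegree_eq_one.mp hQ
    have : 𝔼 y, χ ((C a * X + C b).eval y) = 0 := by
      simp only [eval_add, eval_mul, eval_C, eval_X, AddChar.map_add_eq_mul]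
      rw [← expect_mul, char_avg hχ, if_neg ha, zero_mul]
    rw [this]; simp
  | succ e ih =>
    obtain ⟨K, C, hK, hC, H⟩ := ih
    refine ⟨2 * K, C + 1, by omega, by positivity, ?_⟩
    intro F _ _ χ hχ hch Q hQ
    rw [pow_mul]
    have h1 := pow_le_pow_left₀ (by positivity) (weyl_step χ Q) K
    refine h1.trans ((pow_avg_le _ (fun _ => norm_nonneg _) (by omega)).trans ?_)
    have := avg_bad (fun h => ‖𝔼 y, χ ((taylor h Q - Q).eval y)‖ ^ K) {0}
      (c := C / Fintype.card F) (by positivity)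
      (fun h => pow_le_one₀ (norm_nonneg _) (norm_avg_le_one _ fun y => (char_norm χ _).le))
      (fun h hh => H F χ hχ (hch.mono (by omega)) _ (natDegree_taylor_sub hch hQ (by simpa using hh)))
    refine this.trans (le_of_eq ?_)
    simp; ring
end weyl
end Pel

namespace Pel
set_option linter.unusedSectionVars false
open Finset
open scoped BigOperators ComplexConjugate

section lin
variable {F : Type} [Field F] [Fintype F]

lemma g_mono_one (s : ℕ) (f : F → ℂ) : g s f ^ 2 ≤ g (s + 1) f := by
  induction s generalizing f with
  | zero =>
    simp only [g]
    have h1 := normsq_avg_shift f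
    have h2 : ‖𝔼 y, f y‖ ^ 2 = ‖(((‖𝔼 y, f y‖ ^ 2 : ℝ)) : ℂ)‖ := by
      rw [Complex.norm_real, Real.norm_of_nonneg (by positivity)]
    rw [h2, h1]
    have := cs_avg (fun _ : F => (1 : ℂ)) (fun h => 𝔼 y, f (y + h) * conj (f y)) (by simp)
    simpa [dl] using this
  | succ s ih =>
    have h1 : g (s + 1) f = 𝔼 h, g s (dl h f) := rfl
    have h2 : g (s + 1 + 1) f = 𝔼 h, g (s + 1) (dl h f) := rfl
    rw [h1, h2]
    exact (pow_avg_le _ (fun h => g_nonneg _ _) two_ne_zero).trans (avg_le_avg fun h => ih _)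

lemma g_mono (s t : ℕ) (f : F → ℂ) : g s f ^ 2 ^ t ≤ g (s + t) f := by
  induction t with
  | zero => simp
  | succ t ih =>
    rw [pow_succ 2 t, pow_mul]
    exact (pow_le_pow_left₀ (pow_nonneg (g_nonneg _ _) _) ih 2).trans (g_mono_one _ _)

lemma normsq_eq (z : ℂ) : ‖z‖ ^ 2 = ‖((‖z‖ ^ 2 : ℝ) : ℂ)‖ := by
  rw [Complex.norm_real, Real.norm_of_nonneg (by positivity)]

/-- van der Corput for averages over two variables -/
lemma vdc (u : F → ℂ) (hu : Bd u) (v : F → F → ℂ) (S : F → F) :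
    ‖𝔼 x, u x * 𝔼 y, v x y‖ ^ 2 ≤
      𝔼 h, ‖𝔼 x, 𝔼 y, v (x - S y) (y + h) * conj (v (x - S y) y)‖ := by
  have h1 := cs_avg u (fun x => 𝔼 y, v x y) hu
  refine h1.trans ?_
  have h2 : 𝔼 x, ‖𝔼 y, v x y‖ ^ 2 = ‖((𝔼 x, ‖𝔼 y, v x y‖ ^ 2 : ℝ) : ℂ)‖ := by
    rw [Complex.norm_real, Real.norm_of_nonneg (expect_nonneg fun _ _ => by positivity)]
  rw [h2, ofReal_avg]
  have h3 : 𝔼 x, ((‖𝔼 y, v x y‖ ^ 2 : ℝ) : ℂ) =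
      𝔼 h, 𝔼 x, 𝔼 y, v (x - S y) (y + h) * conj (v (x - S y) y) := by
    have : ∀ x, ((‖𝔼 y, v x y‖ ^ 2 : ℝ) : ℂ) = 𝔼 h, 𝔼 y, v x (y + h) * conj (v x y) :=
      fun x => normsq_avg_shift (v x)
    simp only [this]
    rw [expect_comm]
    refine expect_congr rfl fun h _ => ?_
    rw [expect_comm, expect_comm (f := fun x y => v (x - S y) (y + h) * conj (v (x - S y) y))]
    refine expect_congr rfl fun y _ => ?_
    exact (avg_shift' (S y) (fun x => v x (y + h) * conj (v x y))).symm
  rw [h3]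
  exact norm_avg_le _

lemma linear_case (n : ℕ) (φ : F → ℂ) (a b : F) (f : Fin n → F → ℂ)
    (hf : ∀ i, Bd (f i)) (a' b' : Fin n → F) (ha : ∀ i, a' i ≠ a) :
    ‖𝔼 x, 𝔼 y, φ (x + (a * y + b)) * ∏ i, f i (x + (a' i * y + b' i))‖ ^ 2 ^ (n + 1) ≤ g n φ := by
  induction n generalizing φ a b with
  | zero =>
    simp only [univ_eq_empty, prod_empty, mul_one, zero_add, pow_one, g]
    rw [expect_comm]
    have : ∀ y, 𝔼 x, φ (x + (a * y + b)) = 𝔼 x, φ x := fun y => avg_shift _ φ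
    simp [this]
  | succ n ih =>
    set v : F → F → ℂ := fun x y => φ (x + ((a - a' 0) * y + (b - b' 0))) *
      ∏ i : Fin n, f i.succ (x + ((a' i.succ - a' 0) * y + (b' i.succ - b' 0))) with hv
    have h1 : 𝔼 x, 𝔼 y, φ (x + (a * y + b)) * ∏ i, f i (x + (a' i * y + b' i)) =
        𝔼 x, f 0 x * 𝔼 y, v x y := by
      simp only [mul_expect]
      rw [expect_comm, expect_comm (f := fun x y => f 0 x * v x y)]
      refine expect_congr rfl fun y _ => ?_
      rw [← avg_shift' (a' 0 * y + b' 0)]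
      refine expect_congr rfl fun x _ => ?_
      rw [Fin.prod_univ_succ, hv]
      simp only
      rw [mul_left_comm]
      congr 1
      · congr 1; ring
      congr 1
      · congr 1; ring
      refine prod_congr rfl fun i _ => ?_
      congr 1; ring
    have h2 : ∀ h, ‖𝔼 x, 𝔼 y, v (x - 0) (y + h) * conj (v (x - 0) y)‖ ^ 2 ^ (n + 1) ≤
        g n (dl ((a - a' 0) * h) φ) := by
      intro h
      have := ih (dl ((a - a' 0) * h) φ) (a - a' 0) (b - b' 0)
        (fun i => dl ((a' i.succ - a' 0) * h) (f i.succ)) (fun i => dl_bd _ (hf _))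
        (fun i => a' i.succ - a' 0) (fun i => b' i.succ - b' 0)
        (fun i hi => ha i.succ (sub_left_injective hi))
      refine le_trans (le_of_eq ?_) this
      congr 2
      refine expect_congr rfl fun x _ => expect_congr rfl fun y _ => ?_
      simp only [hv, dl, map_mul, map_prod, prod_mul_distrib, sub_zero]
      rw [mul_mul_mul_comm]
      congr 2
      · congr 1; ring
      · refine prod_congr rfl fun i _ => ?_
        congr 1; ring
    rw [h1, pow_succ' 2 (n + 1), pow_mul]
    have h3 := pow_le_pow_left₀ (by positivity) (vdc (f 0) (hf 0) v (fun _ => 0)) (2 ^ (n + 1))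
    refine h3.trans ((pow_avg_le _ (fun _ => norm_nonneg _) (by positivity)).trans ?_)
    refine (avg_le_avg h2).trans (le_of_eq ?_)
    exact avg_scale (a - a' 0) (sub_ne_zero.mpr (ha 0).symm) (fun h => g n (dl h φ))

end lin
section pet

/-- the counting operator -/
noncomputable def Lam {F : Type} [Field F] [Fintype F] {ι : Type} [Fintype ι]
    (φ : F → ℂ) (R : F[X]) (f : ι → F → ℂ) (P : ι → F[X]) : ℂ :=
  𝔼 x, 𝔼 y, φ (x + R.eval y) * ∏ i, f i (x + (P i).eval y)

variable {F : Type} [Field F] [Fintype F] {ι : Type} [Fintype ι]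

lemma Lam_le_one {φ : F → ℂ} (hφ : Bd φ) (R : F[X]) {f : ι → F → ℂ} (hf : ∀ i, Bd (f i))
    (P : ι → F[X]) : ‖Lam φ R f P‖ ≤ 1 :=
  norm_avg_le_one _ fun _ => norm_avg_le_one _ fun _ => mul_le_one' (hφ _) (prod_bd _ fun i => hf i _)

/-- new functions after van der Corput -/
noncomputable def nf (N : Type) (φ : F → ℂ) (f : N → F → ℂ) : Option (N ⊕ N) → F → ℂ
  | none => fun x => conj (φ x)
  | some (.inl i) => f i
  | some (.inr i) => fun x => conj (f i x)

/-- new polynomials after van der Corput -/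
noncomputable def np (N : Type) (h : F) (S R : F[X]) (P : N → F[X]) : Option (N ⊕ N) → F[X]
  | none => R - S
  | some (.inl i) => taylor h (P i) - S
  | some (.inr i) => P i - S

lemma nf_bd {N : Type} {φ : F → ℂ} (hφ : Bd φ) {f : N → F → ℂ} (hf : ∀ i, Bd (f i)) (i) :
    Bd (nf N φ f i) := by
  rcases i with _ | (i | i) <;> intro x
  · simpa [nf] using hφ x
  · exact hf i x
  · simpa [nf] using hf i x

lemma vdc_poly (φ : F → ℂ) (R : F[X]) (f : ι → F → ℂ) (hf : ∀ i, Bd (f i))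
    (P : ι → F[X]) (S : F[X]) (N : ι → Prop) [DecidablePred N]
    (hN : ∀ i, ¬ N i → (P i).natDegree = 0) :
    ‖Lam φ R f P‖ ^ 2 ≤ 𝔼 h, ‖Lam φ (taylor h R - S)
      (nf {i // N i} φ (fun i => f i)) (np {i // N i} h S R (fun i => P i))‖ := by
  have h1 : Lam φ R f P = 𝔼 x, (∏ i : {i // ¬ N i}, f i (x + (P i).eval 0)) *
      𝔼 y, φ (x + R.eval y) * ∏ i : {i // N i}, f i (x + (P i).eval y) := by
    unfold Lam
    refine expect_congr rfl fun x _ => ?_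
    rw [mul_expect]
    refine expect_congr rfl fun y _ => ?_
    rw [mul_left_comm]
    congr 1
    rw [← Fintype.prod_subtype_mul_prod_subtype N (fun i => f i (x + (P i).eval y)), mul_comm]
    congr 1
    refine prod_congr rfl fun i _ => ?_
    rw [eq_C_of_natDegree_eq_zero (hN i.1 i.2)]
    simp
  rw [h1]
  have h2 := vdc (fun x => ∏ i : {i // ¬ N i}, f i (x + (P i).eval 0))
    (fun x => prod_bd _ fun i => hf _ _)
    (fun x y => φ (x + R.eval y) * ∏ i : {i // N i}, f i (x + (P i).eval y)) (fun y => S.eval y)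
  refine h2.trans (le_of_eq ?_)
  refine expect_congr rfl fun h _ => ?_
  congr 1
  unfold Lam
  refine expect_congr rfl fun x _ => expect_congr rfl fun y _ => ?_
  rw [Fintype.prod_option, Fintype.prod_sum_type]
  simp only [nf, np, eval_sub, taylor_eval, map_mul, map_prod]
  have e : ∀ a b : F, x - b + a = x + (a - b) := fun a b => by ring
  simp only [e]
  ring

lemma card_new (N : ι → Prop) [DecidablePred N] {n : ℕ} (h : Fintype.card ι ≤ n) :
    Fintype.card (Option ({i // N i} ⊕ {i // N i})) ≤ 2 * n + 1 := by
  have := Fintype.card_subtype_le N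
  simp only [Fintype.card_option, Fintype.card_sum]
  omega
end pet
end Pel

namespace Pel
set_option linter.unusedSectionVars false
open Finset
open scoped BigOperators ComplexConjugate

lemma lexInd (d : ℕ) : ∀ (T : (ℕ → ℕ) → Prop)
    (_ : ∀ W, (∀ W', (∃ e, 1 ≤ e ∧ e ≤ d ∧ W' e < W e ∧ ∀ j, e < j → W' j = W j) → T W') → T W),
    ∀ W, T W := by
  induction d with
  | zero =>
    intro T step W
    refine step W ?_
    rintro W' ⟨e, h1, h2, -⟩
    omega
  | succ k ih =>
    intro T step
    have key : ∀ w, ∀ W : ℕ → ℕ, W (k + 1) = w → T W := by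
      intro w
      induction w using Nat.strong_induction_on with
      | _ w ihw =>
        refine ih (fun W => W (k + 1) = w → T W) ?_
        intro W hW hw
        refine step W ?_
        rintro W' ⟨e, h1, h2, h3, h4⟩
        rcases Nat.lt_or_ge k e with he | he
        · have : e = k + 1 := by omega
          subst this
          exact ihw _ (by omega) W' rfl
        · exact hW W' ⟨e, h1, he, h3, h4⟩ (by rw [h4 _ (by omega), hw])
    exact fun W => key _ W rfl

/-- PET statement of degree `d` with weight `W` -/
def PETd (d : ℕ) (W : ℕ → ℕ) : Prop := ∀ n : ℕ, ∃ (s K : ℕ) (C : ℝ), 1 ≤ K ∧ 0 ≤ C ∧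
  ∀ (F : Type) [Field F] [Fintype F] (_ : Ch F d) (ι : Type) [Fintype ι]
    (_ : Fintype.card ι ≤ n) (φ : F → ℂ) (_ : Bd φ) (R : F[X]) (_ : R.natDegree = d)
    (f : ι → F → ℂ) (_ : ∀ i, Bd (f i)) (P : ι → F[X]) (_ : ∀ i, (P i).natDegree ≤ d)
    (_ : ∀ i, 1 ≤ (R - P i).natDegree) (S : ℕ → Finset F) (_ : ∀ j, (S j).card ≤ W j)
    (_ : ∀ i, 1 ≤ (P i).natDegree → (P i).coeff d ≠ R.coeff d →
      (P i).leadingCoeff ∈ S (P i).natDegree),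
    ‖Lam φ R f P‖ ^ K ≤ C * (g s φ + 1 / Fintype.card F)

section
variable {F : Type} [Field F] [Fintype F] {ι : Type} [Fintype ι]

lemma comb {φ : F → ℂ} (hφ : Bd φ) (R : F[X]) (f : ι → F → ℂ) (hf : ∀ i, Bd (f i))
    (P : ι → F[X]) (S : F[X]) (N : ι → Prop) [DecidablePred N]
    (hN : ∀ i, ¬ N i → (P i).natDegree = 0) (B : Finset F) {n K s : ℕ} (hB : B.card ≤ n + 1)
    {C : ℝ} (hK : 1 ≤ K) (hC : 0 ≤ C)
    (H : ∀ h ∉ B, ‖Lam φ (taylor h R - S)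
      (nf {i // N i} φ (fun i => f i)) (np {i // N i} h S R (fun i => P i))‖ ^ K ≤
        C * (g s φ + 1 / Fintype.card F)) :
    ‖Lam φ R f P‖ ^ (2 * K) ≤ (C + (n + 1)) * (g s φ + 1 / Fintype.card F) := by
  have hg := g_nonneg s φ
  rw [pow_mul]
  have h1 := pow_le_pow_left₀ (by positivity) (vdc_poly φ R f hf P S N hN) K
  refine h1.trans ((pow_avg_le _ (fun _ => norm_nonneg _) (by omega)).trans ?_)
  have h2 := avg_bad _ B (c := C * (g s φ + 1 / Fintype.card F)) (by positivity)
    (fun h => pow_le_one₀ (norm_nonneg _) (Lam_le_one hφ (taylor h R - S)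
      (nf_bd hφ (fun i : {i // N i} => hf i)) (np {i // N i} h S R (fun i => P i)))) H
  refine h2.trans ?_
  have h3 : (B.card : ℝ) ≤ n + 1 := by exact_mod_cast hB
  have h4 : (B.card : ℝ) / Fintype.card F ≤ (n + 1) * (g s φ + 1 / Fintype.card F) := by
    rw [div_eq_mul_one_div]
    gcongr
    linarith
  linarith

lemma bad_set {d : ℕ} (hd : Ch F (d + 2)) {R : F[X]} (hR : R.natDegree = d + 2) (P : ι → F[X])
    (hRP : ∀ i, 1 ≤ (R - P i).natDegree)
    (S : F[X]) (N : ι → Prop) [DecidablePred N] {n : ℕ} (hn : Fintype.card ι ≤ n) :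
    ∃ B : Finset F, B.card ≤ n + 1 ∧ 0 ∈ B ∧ ∀ h ∉ B, ∀ j,
      1 ≤ (taylor h R - S - np {i // N i} h S R (fun i => P i) j).natDegree := by
  classical
  have hR0 : R.coeff (d + 2) ≠ 0 := by
    rw [← hR]
    simpa using (show R ≠ 0 by rintro rfl; simp at hR)
  have hd2 : ((d + 1 + 1 : ℕ) : F) ≠ 0 := hd _ (by omega) le_rfl
  refine ⟨insert 0 (univ.image fun i => ((P i).coeff (d + 1) - R.coeff (d + 1)) /
    ((d + 1 + 1 : ℕ) * R.coeff (d + 2))), ?_, by simp, ?_⟩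
  · refine (card_insert_le _ _).trans ?_
    have := card_image_le (s := (univ : Finset ι)) (f := fun i => ((P i).coeff (d + 1) - R.coeff (d + 1)) /
      ((d + 1 + 1 : ℕ) * R.coeff (d + 2)))
    rw [card_univ] at this
    omega
  · intro h hh j
    rw [mem_insert, not_or] at hh
    obtain ⟨h0, h1⟩ := hh
    rcases j with _ | (i | i)
    · simp only [np, sub_sub_sub_cancel_right]
      rw [natDegree_taylor_sub hd hR h0]
      omega
    · simp only [np, sub_sub_sub_cancel_right]
      rw [← map_sub, natDegree_taylor]
      exact hRP _
    · simp only [np, sub_sub_sub_cancel_right]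
      refine le_trans (by omega : 1 ≤ d + 1) (le_natDegree_of_ne_zero ?_)
      rw [coeff_sub, taylor_coeff_sub hR.le]
      intro h2
      apply h1
      rw [mem_image]
      refine ⟨i, mem_univ _, ?_⟩
      rw [div_eq_iff (mul_ne_zero hd2 hR0)]
      linear_combination -h2
end

lemma pet_one (W : ℕ → ℕ) : PETd 1 W := by
  intro n
  refine ⟨n, 2 ^ (n + 1), 1, Nat.one_le_two_pow, zero_le_one, ?_⟩
  intro F _ _ hch ι _ hn φ hφ R hR f hf P hP hRP S _ _
  have e := (Fintype.equivFin ι).symm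
  have ev : ∀ (Q : F[X]), Q.natDegree ≤ 1 → ∀ y, Q.eval y = Q.coeff 1 * y + Q.coeff 0 := by
    intro Q hQ y
    rw [eval_eq_sum_range' (n := 2) (by omega)]
    simp [sum_range_succ]; ring
  have h1 := linear_case (Fintype.card ι) φ (R.coeff 1) (R.coeff 0) (fun i => f (e i))
    (fun i => hf _) (fun i => (P (e i)).coeff 1) (fun i => (P (e i)).coeff 0) (by
      intro i hi
      have h2 := hRP (e i)
      have h3 : (R - P (e i)).natDegree ≤ 0 := natDegree_le_pred
        ((natDegree_sub_le _ _).trans (max_le hR.le (hP _))) (by simp [hi])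
      omega)
  have h2 : Lam φ R f P = 𝔼 x, 𝔼 y, φ (x + (R.coeff 1 * y + R.coeff 0)) *
      ∏ i, f (e i) (x + ((P (e i)).coeff 1 * y + (P (e i)).coeff 0)) := by
    unfold Lam
    refine expect_congr rfl fun x _ => expect_congr rfl fun y _ => ?_
    rw [ev R hR.le]
    congr 1
    rw [← e.prod_comp]
    refine prod_congr rfl fun i _ => ?_
    rw [ev _ (hP _)]
  rw [← h2] at h1
  obtain ⟨t, rfl⟩ := Nat.exists_eq_add_of_le hn
  have h3 := pow_le_pow_left₀ (by positivity) h1 (2 ^ t)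
  have h4 := h3.trans (g_mono _ t φ)
  rw [← pow_mul, ← pow_add] at h4
  rw [show Fintype.card ι + t + 1 = Fintype.card ι + 1 + t by ring]
  refine h4.trans ?_
  have : (0 : ℝ) ≤ 1 / Fintype.card F := by positivity
  linarith

set_option maxHeartbeats 800000 in
lemma pet_step (d : ℕ) (ih : ∀ W, PETd (d + 1) W) : ∀ W, PETd (d + 2) W := by
  classical
  refine lexInd (d + 2) _ ?_
  intro W IH n
  by_cases hW : ∃ e, 1 ≤ e ∧ e ≤ d + 2 ∧ W e ≠ 0
  · set e := Nat.find hW with he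
    obtain ⟨he1, he2, he3⟩ := Nat.find_spec hW
    rw [← he] at he1 he2 he3
    have hmin : ∀ j, 1 ≤ j → j < e → W j = 0 := by
      intro j h1 h2
      have := Nat.find_min hW h2
      by_contra h3
      exact this ⟨h1, by omega, h3⟩
    obtain ⟨s, K, C, hK, hC, H⟩ := IH (fun j => if j < e then 2 * n + 1 else if j = e then W e - 1
      else W j) ⟨e, he1, he2, by simp; omega, fun j hj => by
        simp [show ¬ j < e by omega, show j ≠ e by omega]⟩ (2 * n + 1)
    refine ⟨s, 2 * K, C + (n + 1), by omega, by positivity, ?_⟩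
    intro F _ _ hch ι _ hn φ hφ R hR f hf P hP hRP S hS1 hS2
    obtain ⟨N, hN⟩ : ∃ N : ι → Prop, ∀ i, N i ↔ 1 ≤ (P i).natDegree := ⟨_, fun i => Iff.rfl⟩
    have hSe : ∀ j, 1 ≤ j → j < e → S j = ∅ := by
      intro j h1 h2
      have := hS1 j
      rw [hmin j h1 h2] at this
      exact card_eq_zero.mp (by omega)
    by_cases hk : ∃ k, (P k).natDegree = e ∧ (P k).coeff (d + 2) ≠ R.coeff (d + 2)
    · obtain ⟨k, hk1, hk2⟩ := hk
      obtain ⟨B, hB1, hB2, hB3⟩ := bad_set hch hR P hRP (P k) N hn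
      refine comb hφ R f hf P (P k) N (fun i hi => by have := (hN i).not.mp hi; omega) B hB1 hK hC ?_
      intro h hh
      have hc : ∀ i, (np {i // N i} h (P k) R (fun i => P i) i).natDegree ≤ d + 2 := by
        intro i
        rcases i with _ | (i | i) <;> simp only [np] <;> refine (natDegree_sub_le _ _).trans ?_ <;>
          simp [natDegree_taylor, hP, hR.le]
      have hc' : (taylor h R - P k).natDegree ≤ d + 2 := by
        refine (natDegree_sub_le _ _).trans ?_
        simp [natDegree_taylor, hP, hR.le]
      have htop : (taylor h R - P k).coeff (d + 2) = R.coeff (d + 2) - (P k).coeff (d + 2) := by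
        rw [coeff_sub, taylor_coeff_top hR.le]
      -- generic facts for a member
      have gen : ∀ (Q Q' : F[X]), Q.natDegree ≤ d + 2 → 1 ≤ Q.natDegree →
          Q'.natDegree = Q.natDegree → Q'.leadingCoeff = Q.leadingCoeff →
          (Q.coeff (d + 2) ≠ R.coeff (d + 2) → Q.leadingCoeff ∈ S Q.natDegree) →
          Q.coeff (d + 2) ≠ R.coeff (d + 2) →
          ¬ (Q' - P k).natDegree < e →
          (Q' - P k).leadingCoeff ∈ (if (Q' - P k).natDegree = e then
            ((S e).erase (P k).leadingCoeff).image (fun a => a - (P k).leadingCoeff) else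
              S (Q' - P k).natDegree) := by
        intro Q Q' h1 h2 h3 h4 h5 h6 h7
        have h8 := h5 h6
        have h9 : e ≤ Q.natDegree := by
          by_contra h10
          rw [hSe _ h2 (by omega)] at h8
          simp at h8
        rcases h9.eq_or_lt with h10 | h10
        · have h11 : (Q' - P k).natDegree ≤ e := (natDegree_sub_le _ _).trans (by omega)
          have h12 : (Q' - P k).natDegree = e := by omega
          rw [if_pos h12]
          have h13 : (Q' - P k).leadingCoeff = Q.leadingCoeff - (P k).leadingCoeff := by
            rw [← h4, leadingCoeff, h12, coeff_sub, leadingCoeff, leadingCoeff, h3, ← h10, hk1]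
          rw [h13, mem_image]
          refine ⟨_, mem_erase.mpr ⟨?_, h10 ▸ h8⟩, rfl⟩
          intro h14
          rw [h14, sub_self, leadingCoeff_eq_zero] at h13
          rw [h13] at h12
          simp at h12
          omega
        · have h11 : (Q' - P k).natDegree = Q.natDegree := by
            rw [← h3]; exact natDegree_sub_eq_left_of_natDegree_lt (by omega)
          rw [if_neg (by omega), leadingCoeff, h11, coeff_sub,
            coeff_eq_zero_of_natDegree_lt (p := P k) (by omega), sub_zero, ← h3, coeff_natDegree, h4, h3]
          exact h8
      refine H F hch (Option ({i // N i} ⊕ {i // N i})) (card_new N hn) φ hφ (taylor h R - P k) ?_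
        (nf {i // N i} φ (fun i => f i)) (nf_bd hφ (fun i => hf i))
        (np {i // N i} h (P k) R (fun i => P i)) hc
        (fun j => hB3 h hh j)
        (fun j => if j < e then univ.image (fun i => (np {i // N i} h (P k) R
          (fun i => P i) i).leadingCoeff) else if j = e then
            ((S e).erase (P k).leadingCoeff).image (fun a => a - (P k).leadingCoeff) else S j) ?_ ?_
      · refine natDegree_eq_of hc' ?_
        rw [htop]
        exact sub_ne_zero.mpr hk2.symm
      · intro j
        simp only
        split_ifs with h1 h2
        · refine card_image_le.trans ?_
          rw [card_univ]
          exact card_new N hn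
        · refine card_image_le.trans ?_
          rw [card_erase_of_mem (by
            have := hS2 k (by omega) hk2
            rwa [hk1] at this)]
          have := hS1 e
          omega
        · exact hS1 j
      · intro j h1 h2
        rw [htop] at h2
        split_ifs with h3
        · exact mem_image_of_mem _ (mem_univ j)
        all_goals rename_i h4
        all_goals
          rcases j with _ | (i | i)
          · simp [np] at h2
          · simp only [np] at h1 h2 h3 h4 ⊢
            have := gen (P i) (taylor h (P i)) (hP _) ((hN i).mp i.2) (natDegree_taylor _ _)
              (leadingCoeff_taylor _ _) (hS2 i ((hN i).mp i.2)) (by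
                rw [coeff_sub, taylor_coeff_top (hP _)] at h2
                exact fun h5 => h2 (by rw [h5])) h3
            simpa [h4] using this
          · simp only [np] at h1 h2 h3 h4 ⊢
            have := gen (P i) (P i) (hP _) ((hN i).mp i.2) rfl rfl (hS2 i ((hN i).mp i.2)) (by
                rw [coeff_sub] at h2
                exact fun h5 => h2 (by rw [h5])) h3
            simpa [h4] using this
    · push Not at hk
      have h1 := H F hch ι (by omega) φ hφ R hR f hf P hP hRP (fun j => if j ≤ e then ∅ else S j) ?_ ?_
      · have hg := g_nonneg s φ
        calc _ ≤ ‖Lam φ R f P‖ ^ K :=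
              pow_le_pow_of_le_one (norm_nonneg _) (Lam_le_one hφ R hf P) (by omega)
          _ ≤ _ := h1
          _ ≤ _ := by gcongr; linarith
      · intro j
        simp only
        split_ifs with h1 h2 h3 h4 h5
        all_goals first | simp | omega | exact hS1 j
      · intro i h1 h2
        have h3 := hS2 i h1 h2
        have h4 : ¬ (P i).natDegree ≤ e := by
          intro h4
          rcases h4.eq_or_lt with h5 | h5
          · exact h2 (hk i h5)
          · rw [hSe _ h1 h5] at h3; simp at h3
        simpa [h4] using h3
  · push Not at hW
    obtain ⟨s, K, C, hK, hC, H⟩ := ih (fun _ => 2 * n + 1) (2 * n + 1)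
    refine ⟨s, 2 * K, C + (n + 1), by omega, by positivity, ?_⟩
    intro F _ _ hch ι _ hn φ hφ R hR f hf P hP hRP S hS1 hS2
    obtain ⟨N, hN⟩ : ∃ N : ι → Prop, ∀ i, N i ↔ 1 ≤ (P i).natDegree := ⟨_, fun i => Iff.rfl⟩
    obtain ⟨B, hB1, hB2, hB3⟩ := bad_set hch hR P hRP R N hn
    refine comb hφ R f hf P R N (fun i hi => by have := (hN i).not.mp hi; omega) B hB1 hK hC ?_
    intro h hh
    have hmem : ∀ i, 1 ≤ (P i).natDegree → (P i).coeff (d + 2) = R.coeff (d + 2) := by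
      intro i hi
      by_contra h1
      have h2 := hS2 i hi h1
      have h3 := hS1 (P i).natDegree
      rw [hW _ hi (hP i)] at h3
      rw [card_eq_zero.mp (by omega : (S (P i).natDegree).card = 0)] at h2
      simp at h2
    refine H F (hch.mono (by omega)) (Option ({i // N i} ⊕ {i // N i})) (card_new N hn) φ hφ
        (taylor h R - R) ?_ (nf {i // N i} φ (fun i => f i)) (nf_bd hφ (fun i => hf i))
        (np {i // N i} h R R (fun i => P i)) ?_
        (fun j => hB3 h hh j) (fun _ => univ.image (fun i => (np {i // N i} h R R
          (fun i => P i) i).leadingCoeff)) ?_ ?_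
    · exact natDegree_taylor_sub hch hR (fun h0 => hh (h0 ▸ hB2))
    · intro i
      rcases i with _ | (i | i) <;> simp only [np]
      · simp
      all_goals
        refine natDegree_le_pred ((natDegree_sub_le _ _).trans ?_) ?_
        · simp [natDegree_taylor, hP, hR.le]
        · first
          | rw [coeff_sub, taylor_coeff_top (hP _), hmem _ ((hN i).mp i.2), sub_self]
          | rw [coeff_sub, hmem _ ((hN i).mp i.2), sub_self]
    · intro j
      refine card_image_le.trans ?_
      rw [card_univ]
      exact card_new N hn
    · intro j _ _
      exact mem_image_of_mem _ (mem_univ j)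

lemma pet_all (d : ℕ) : ∀ W, PETd (d + 1) W := by
  induction d with
  | zero => exact pet_one
  | succ d ih => exact pet_step d ih

/-- PET induction, final form -/
lemma pet (d n : ℕ) : ∃ (s K : ℕ) (C : ℝ), 1 ≤ K ∧ 0 ≤ C ∧
  ∀ (F : Type) [Field F] [Fintype F] (_ : Ch F (d + 1)) (ι : Type) [Fintype ι]
    (_ : Fintype.card ι ≤ n) (φ : F → ℂ) (_ : Bd φ) (R : F[X]) (_ : R.natDegree ≤ d)
    (f : ι → F → ℂ) (_ : ∀ i, Bd (f i)) (P : ι → F[X]) (_ : ∀ i, (P i).natDegree ≤ d)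
    (_ : ∀ i, 1 ≤ (R - P i).natDegree),
    ‖Lam φ R f P‖ ^ K ≤ C * (g (s + 1) φ + 1 / Fintype.card F) := by
  obtain ⟨s, K, C, hK, hC, H⟩ := pet_all d (fun _ => 0) n
  refine ⟨s, 2 * K, (2 * C) ^ 2, by omega, by positivity, ?_⟩
  intro F _ _ hch ι _ hn φ hφ R hR f hf P hP hRP
  have hdeg : ∀ Q : F[X], Q.natDegree ≤ d → (Q + X ^ (d + 1)).natDegree = d + 1 ∧
      (Q + X ^ (d + 1)).coeff (d + 1) = 1 := by
    intro Q hQ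
    have : (Q + X ^ (d + 1)).coeff (d + 1) = 1 := by
      rw [coeff_add, coeff_eq_zero_of_natDegree_lt (by omega)]; simp
    refine ⟨natDegree_eq_of ((natDegree_add_le _ _).trans ?_) (by rw [this]; exact one_ne_zero), this⟩
    simp; omega
  have h1 := H F hch ι hn φ hφ (R + X ^ (d + 1)) (hdeg R hR).1 f hf (fun i => P i + X ^ (d + 1))
    (fun i => (hdeg _ (hP i)).1.le) (fun i => by simpa using hRP i) (fun _ => ∅) (by simp)
    (fun i _ h => (h (by rw [(hdeg _ (hP i)).2, (hdeg _ hR).2])).elim)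
  have h2 : Lam φ (R + X ^ (d + 1)) f (fun i => P i + X ^ (d + 1)) = Lam φ R f P := by
    unfold Lam
    rw [expect_comm, expect_comm (f := fun x y => φ (x + R.eval y) * ∏ i, f i (x + (P i).eval y))]
    refine expect_congr rfl fun y _ => ?_
    have := avg_shift (y ^ (d + 1)) (fun x => φ (x + R.eval y) * ∏ i, f i (x + (P i).eval y))
    rw [← this]
    refine expect_congr rfl fun x _ => ?_
    simp [add_assoc, add_comm]
  rw [h2] at h1
  rw [mul_comm 2 K, pow_mul]
  refine (pow_le_pow_left₀ (by positivity) h1 2).trans ?_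
  have h3 := g_mono_one s φ
  have h4 := g_nonneg s φ
  have hq : (1 : ℝ) ≤ Fintype.card F := by exact_mod_cast Fintype.card_pos
  have hq1 : (1 : ℝ) / Fintype.card F ≤ 1 := by rw [div_le_one (by linarith)]; exact hq
  have hq0 : (0 : ℝ) ≤ 1 / Fintype.card F := by positivity
  set u : ℝ := 1 / Fintype.card F
  rw [mul_pow, mul_pow]
  have h5 : (g s φ + u) ^ 2 ≤ 2 ^ 2 * (g (s + 1) φ + u) := by nlinarith [sq_nonneg (g s φ - u)]
  calc _ ≤ C ^ 2 * (2 ^ 2 * (g (s + 1) φ + u)) := by gcongr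
    _ = _ := by ring
end Pel

namespace Pel
set_option linter.unusedSectionVars false
open Finset
open scoped BigOperators ComplexConjugate

lemma weyl_unif (d : ℕ) : ∃ (K : ℕ) (C : ℝ), 1 ≤ K ∧ 0 ≤ C ∧
    ∀ (F : Type) [Field F] [Fintype F] (χ : AddChar F ℂ) (_ : χ.IsPrimitive) (_ : Ch F d)
      (Q : F[X]) (_ : 1 ≤ Q.natDegree) (_ : Q.natDegree ≤ d),
      ‖𝔼 y, χ (Q.eval y)‖ ^ K ≤ C / Fintype.card F := by
  induction d with
  | zero =>
    refine ⟨1, 0, le_rfl, le_rfl, ?_⟩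
    intro F _ _ χ hχ hch Q h1 h2
    omega
  | succ d ih =>
    obtain ⟨K, C, hK, hC, H⟩ := ih
    obtain ⟨K', C', hK', hC', H'⟩ := weyl d
    refine ⟨K + K', C + C', by omega, by positivity, ?_⟩
    intro F _ _ χ hχ hch Q h1 h2
    have hle : ‖𝔼 y, χ (Q.eval y)‖ ≤ 1 := norm_avg_le_one _ fun y => (char_norm χ _).le
    rcases h2.eq_or_lt with h3 | h3
    · calc _ ≤ ‖𝔼 y, χ (Q.eval y)‖ ^ K' := pow_le_pow_of_le_one (norm_nonneg _) hle (by omega)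
        _ ≤ C' / Fintype.card F := H' F χ hχ hch Q h3
        _ ≤ _ := by gcongr; linarith
    · calc _ ≤ ‖𝔼 y, χ (Q.eval y)‖ ^ K := pow_le_pow_of_le_one (norm_nonneg _) hle (by omega)
        _ ≤ C / Fintype.card F := H F χ hχ (hch.mono (by omega)) Q h1 (by omega)
        _ ≤ _ := by gcongr; linarith

lemma exists_root {c : ℝ} (hc : 0 ≤ c) {K : ℕ} (hK : 1 ≤ K) : ∃ ε : ℝ, 0 ≤ ε ∧ ε ≤ 1 ∧ ε ^ K ≤ c ∧
    ∀ x : ℝ, 0 ≤ x → x ≤ 1 → x ^ K ≤ c → x ≤ ε := by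
  have h1 : (c ^ ((K : ℝ)⁻¹)) ^ K = c := Real.rpow_inv_natCast_pow hc (by omega)
  have h0 : 0 ≤ c ^ ((K : ℝ)⁻¹) := by positivity
  refine ⟨min 1 (c ^ ((K : ℝ)⁻¹)), le_min zero_le_one h0, min_le_left _ _, ?_, ?_⟩
  · refine (pow_le_pow_left₀ (le_min zero_le_one h0) (min_le_right _ _) K).trans h1.le
  · intro x hx hx1 hxc
    refine le_min hx1 ?_
    rw [← h1] at hxc
    exact (pow_le_pow_iff_left₀ hx h0 (by omega)).mp hxc

lemma one_le_natDegree {F : Type} [Field F] {Q : F[X]} (h0 : Q.coeff 0 = 0) (h : Q ≠ 0) :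
    1 ≤ Q.natDegree := by
  by_contra h1
  apply h
  rw [eq_C_of_natDegree_eq_zero (p := Q) (by omega), h0, C_0]

section
variable {F : Type} [Field F] [Fintype F]

/-- the kernel identity -/
lemma kernel_id {m : ℕ} (χ : AddChar F ℂ) (p Q : F[X]) (P : Fin m → F[X]) (f0 : F → ℂ)
    (f : Fin m → F → ℂ) (a b : F) :
    𝔼 x, 𝔼 y, χ (a * x) * (f0 (x - p.eval y) * (∏ i, f i (x + (P i - p).eval y)) * χ (b * Q.eval y)) =
    𝔼 x, 𝔼 y, (χ (a * x) * f0 x) * (∏ i, f i (x + (P i).eval y)) * χ ((b • Q + a • p).eval y) := by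
  rw [expect_comm, expect_comm (f := fun x y => (χ (a * x) * f0 x) *
    (∏ i, f i (x + (P i).eval y)) * χ ((b • Q + a • p).eval y))]
  refine expect_congr rfl fun y _ => ?_
  have := avg_shift (p.eval y) (fun x => χ (a * x) *
    (f0 (x - p.eval y) * (∏ i, f i (x + (P i - p).eval y)) * χ (b * Q.eval y)))
  rw [← this]
  refine expect_congr rfl fun x _ => ?_
  have e : ∀ i, x + p.eval y + (P i - p).eval y = x + (P i).eval y := fun i => by
    rw [eval_sub]; ring
  simp only [e, add_sub_cancel_right, eval_add, eval_smul, smul_eq_mul, mul_add,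
    AddChar.map_add_eq_mul]
  ring

/-- members of the PET system -/
noncomputable def mf {m : ℕ} (χ : AddChar F ℂ) (f0 : F → ℂ) (f : Fin m → F → ℂ) :
    Option (Option (Fin m)) → F → ℂ
  | none => fun x => conj (f0 x) * χ x
  | some none => fun x => χ (-x)
  | some (some i) => fun x => conj (f i x)

noncomputable def mp {m : ℕ} (Q : F[X]) (P : Fin m → F[X]) : Option (Option (Fin m)) → F[X]
  | none => 0
  | some none => Q
  | some (some i) => P i

lemma dual_id {m : ℕ} (χ : AddChar F ℂ) (p Q : F[X]) (P : Fin m → F[X]) (f0 : F → ℂ)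
    (f : Fin m → F → ℂ) (b : F → ℂ) (hb : Bd b) (D : F → ℂ)
    (hD : ∀ x, D x = 𝔼 y, f0 (x - p.eval y) * (∏ i, f i (x + (P i - p).eval y)) * χ (Q.eval y)) :
    ‖𝔼 x, 𝔼 y, f0 x * (b (x + p.eval y) * ∏ i, f i (x + (P i).eval y)) * χ (Q.eval y)‖ ^ 2 ≤
      ‖Lam D p (mf χ f0 f) (mp Q P)‖ := by
  have h1 : 𝔼 x, 𝔼 y, f0 x * (b (x + p.eval y) * ∏ i, f i (x + (P i).eval y)) * χ (Q.eval y) =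
      𝔼 x, b x * D x := by
    simp only [hD, mul_expect]
    rw [expect_comm, expect_comm (f := fun x y => b x * (f0 (x - p.eval y) *
      (∏ i, f i (x + (P i - p).eval y)) * χ (Q.eval y)))]
    refine expect_congr rfl fun y _ => ?_
    have := avg_shift (p.eval y) (fun x => b x * (f0 (x - p.eval y) *
      (∏ i, f i (x + (P i - p).eval y)) * χ (Q.eval y)))
    rw [← this]
    refine expect_congr rfl fun x _ => ?_
    have e : ∀ i, x + p.eval y + (P i - p).eval y = x + (P i).eval y := fun i => by
      rw [eval_sub]; ring
    simp only [e, add_sub_cancel_right]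
    ring
  have h2 : ((𝔼 x, ‖D x‖ ^ 2 : ℝ) : ℂ) = Lam D p (mf χ f0 f) (mp Q P) := by
    rw [ofReal_avg]
    have : ∀ x, ((‖D x‖ ^ 2 : ℝ) : ℂ) = 𝔼 y, D x * conj (f0 (x - p.eval y) *
        (∏ i, f i (x + (P i - p).eval y)) * χ (Q.eval y)) := by
      intro x
      rw [← Complex.normSq_eq_norm_sq, ← Complex.mul_conj, ← mul_expect]
      congr 1
      conv_lhs => rw [hD]
      rw [conj_avg]
    simp only [this]
    unfold Lam
    rw [expect_comm, expect_comm (f := fun x y => D (x + p.eval y) *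
      ∏ i, mf χ f0 f i (x + (mp Q P i).eval y))]
    refine expect_congr rfl fun y _ => ?_
    have := avg_shift (p.eval y) (fun x => D x * conj (f0 (x - p.eval y) *
        (∏ i, f i (x + (P i - p).eval y)) * χ (Q.eval y)))
    rw [← this]
    refine expect_congr rfl fun x _ => ?_
    have e : ∀ i, x + p.eval y + (P i - p).eval y = x + (P i).eval y := fun i => by
      rw [eval_sub]; ring
    have e2 : conj (χ (Q.eval y)) = χ x * χ (-(x + Q.eval y)) := by
      rw [← AddChar.map_neg_eq_conj, ← AddChar.map_add_eq_mul]; congr 1; ring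
    rw [Fintype.prod_option, Fintype.prod_option]
    simp only [e, add_sub_cancel_right, map_mul (starRingEnd ℂ), mf, mp, eval_zero, add_zero, e2, map_prod]
    ring
  rw [h1, ← h2, Complex.norm_real, Real.norm_of_nonneg (expect_nonneg fun _ _ => by positivity)]
  exact cs_avg b D hb

end

lemma numeric {K0 K1 K2 : ℕ} (hK0 : 1 ≤ K0) (hK2 : 1 ≤ K2) {C0 C1 C2 : ℝ} (hC1 : 0 ≤ C1)
    (hC2 : 0 ≤ C2) {L G u ε : ℝ} (hL : 0 ≤ L) (hG : 0 ≤ G) (hu : 0 ≤ u) (hu1 : u ≤ 1) (hε : 0 ≤ ε)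
    (h1 : L ^ K1 ≤ C1 * (G + u)) (h2 : G ^ K2 ≤ C2 * ε) (h3 : ε ^ K0 ≤ C0 * u) :
    L ^ (K1 * K2 * K0) ≤ (C1 ^ K2 * 2 ^ K2) ^ K0 * (2 ^ K0 * (C2 ^ K0 * C0 + 1)) * u := by
  have a1 : L ^ (K1 * K2) ≤ C1 ^ K2 * 2 ^ K2 * (C2 * ε + u) := by
    rw [pow_mul]
    calc _ ≤ (C1 * (G + u)) ^ K2 := pow_le_pow_left₀ (by positivity) h1 _
      _ = C1 ^ K2 * (G + u) ^ K2 := mul_pow _ _ _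
      _ ≤ C1 ^ K2 * (2 ^ (K2 - 1) * (G ^ K2 + u ^ K2)) := by gcongr; exact add_pow_le hG hu _
      _ ≤ C1 ^ K2 * (2 ^ K2 * (C2 * ε + u)) := by
        gcongr
        · norm_num
        · omega
        · exact pow_le_of_le_one hu hu1 (by omega)
      _ = _ := by ring
  rw [pow_mul]
  calc _ ≤ (C1 ^ K2 * 2 ^ K2 * (C2 * ε + u)) ^ K0 := pow_le_pow_left₀ (by positivity) a1 _
    _ = (C1 ^ K2 * 2 ^ K2) ^ K0 * (C2 * ε + u) ^ K0 := mul_pow _ _ _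
    _ ≤ (C1 ^ K2 * 2 ^ K2) ^ K0 * (2 ^ (K0 - 1) * ((C2 * ε) ^ K0 + u ^ K0)) := by
      gcongr; exact add_pow_le (by positivity) hu _
    _ ≤ (C1 ^ K2 * 2 ^ K2) ^ K0 * (2 ^ K0 * (C2 ^ K0 * (C0 * u) + u)) := by
      rw [mul_pow C2 ε]
      gcongr
      · norm_num
      · omega
      · exact pow_le_of_le_one hu hu1 (by omega)
    _ = _ := by ring

lemma main_ind (d m : ℕ) : ∃ (K : ℕ) (C : ℝ), 1 ≤ K ∧ 0 ≤ C ∧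
    ∀ (F : Type) [Field F] [Fintype F] (χ : AddChar F ℂ) (_ : χ.IsPrimitive) (_ : Ch F (d + 1))
      (P : Fin m → F[X]) (_ : ∀ i, (P i).coeff 0 = 0) (_ : ∀ i, (P i).natDegree ≤ d)
      (_ : LinearIndependent F P) (Q : F[X]) (_ : Q.coeff 0 = 0) (_ : Q.natDegree ≤ d)
      (f0 : F → ℂ) (_ : Bd f0) (f : Fin m → F → ℂ) (_ : ∀ i, Bd (f i))
      (_ : Q ∉ Submodule.span F (Set.range P) ∨ (Q = 0 ∧ 𝔼 x, f0 x = 0)),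
      ‖𝔼 x, 𝔼 y, f0 x * (∏ i, f i (x + (P i).eval y)) * χ (Q.eval y)‖ ^ K ≤ C / Fintype.card F := by
  induction m with
  | zero =>
    obtain ⟨K, C, hK, hC, H⟩ := weyl_unif d
    refine ⟨K, C, hK, hC, ?_⟩
    intro F _ _ χ hχ hch P _ _ _ Q hQ0 hQd f0 hf0 f _ hcond
    have h1 : 𝔼 x, 𝔼 y, f0 x * (∏ i, f i (x + (P i).eval y)) * χ (Q.eval y) =
        (𝔼 x, f0 x) * 𝔼 y, χ (Q.eval y) := by
      simp [expect_mul_expect]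
    rw [h1]
    rcases hcond with h | ⟨_, h⟩
    · have hQ : Q ≠ 0 := by rintro rfl; exact h (Submodule.zero_mem _)
      have h2 := H F χ hχ (hch.mono (by omega)) Q (one_le_natDegree hQ0 hQ) hQd
      refine le_trans (pow_le_pow_left₀ (norm_nonneg _) ?_ K) h2
      rw [norm_mul]
      exact mul_le_of_le_one_left (norm_nonneg _) (norm_avg_le_one _ hf0)
    · rw [h, zero_mul, norm_zero, zero_pow (by omega)]
      positivity
  | succ m ih =>
    obtain ⟨K0, C0, hK0, hC0, H0⟩ := ih
    obtain ⟨s, K1, C1, hK1, hC1, H1⟩ := pet d (m + 2)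
    obtain ⟨K2, C2, hK2, hC2, H2⟩ := degree_lower_iter s
    refine ⟨2 * (K1 * K2 * K0), (C1 ^ K2 * 2 ^ K2) ^ K0 * (2 ^ K0 * ((2 * C2) ^ K0 * C0 + 1)),
      ?_, by positivity, ?_⟩
    · have : K1 * K2 * K0 ≠ 0 := by
        refine mul_ne_zero (mul_ne_zero ?_ ?_) ?_ <;> omega
      omega
    intro F _ _ χ hχ hch P hP0 hPd hPi Q hQ0 hQd f0 hf0 f hf hcond
    have hli := hPi
    rw [linearIndependent_finSucc] at hli
    obtain ⟨hli', hp⟩ := hli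
    set p := P 0 with hpdef
    set P' : Fin m → F[X] := Fin.tail P with hP'
    set f' : Fin m → F → ℂ := Fin.tail f with hf'
    have hf'b : ∀ i, Bd (f' i) := fun i => hf i.succ
    have hP'0 : ∀ i, (P' i).coeff 0 = 0 := fun i => hP0 i.succ
    have hP'd : ∀ i, (P' i).natDegree ≤ d := fun i => hPd i.succ
    have hsub : Submodule.span F (Set.range P') ≤ Submodule.span F (Set.range P) := by
      apply Submodule.span_mono
      rintro _ ⟨i, rfl⟩
      exact ⟨i.succ, rfl⟩
    have hpm : p ∈ Submodule.span F (Set.range P) := Submodule.subset_span ⟨0, rfl⟩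
    set u : ℝ := 1 / Fintype.card F with hu
    have hq : (1 : ℝ) ≤ Fintype.card F := by exact_mod_cast Fintype.card_pos
    have hu1 : u ≤ 1 := by rw [hu, div_le_one (by linarith)]; exact hq
    have hu0 : 0 ≤ u := by positivity
    obtain ⟨ε, hε0, hε1, hεK, hεm⟩ := exists_root (c := C0 * u) (by positivity) hK0
    -- application of the induction hypothesis
    have hIH : ∀ (f0' : F → ℂ) (_ : Bd f0') (f'' : Fin m → F → ℂ) (_ : ∀ i, Bd (f'' i)) (a b : F)
        (_ : (b • Q + a • p) ∉ Submodule.span F (Set.range P') ∨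
          (b • Q + a • p = 0 ∧ 𝔼 x, χ (a * x) * f0' x = 0)),
        ‖𝔼 x, 𝔼 y, χ (a * x) * (f0' (x - p.eval y) * (∏ i, f'' i (x + (P' i - p).eval y)) *
          χ (b * Q.eval y))‖ ≤ ε := by
      intro f0' hf0' f'' hf'' a b hc
      apply hεm _ (norm_nonneg _)
      · refine norm_avg_le_one _ fun x => norm_avg_le_one _ fun y => ?_
        exact mul_le_one' (char_norm _ _).le (mul_le_one' (mul_le_one' (hf0' _)
          (prod_bd _ fun i => hf'' i _)) (char_norm _ _).le)
      · rw [kernel_id]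
        have := H0 F χ hχ hch P' hP'0 hP'd hli' (b • Q + a • p) (by simp [hQ0, hpdef, hP0])
          ((natDegree_add_le _ _).trans (max_le ((natDegree_smul_le _ _).trans hQd)
            ((natDegree_smul_le _ _).trans (hPd 0)))) (fun x => χ (a * x) * f0' x)
          (fun x => mul_le_one' (char_norm _ _).le (hf0' x)) f'' hf'' hc
        rwa [div_eq_mul_one_div] at this
    have hspan : ∀ a b : F, a ≠ 0 → (b • Q + a • p) ∉ Submodule.span F (Set.range P') := by
      intro a b ha hmem
      have h1 : b • Q ∈ Submodule.span F (Set.range P) := by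
        have := Submodule.sub_mem _ (hsub hmem) (Submodule.smul_mem _ a hpm)
        simpa using this
      have h2 : b • Q = 0 := by
        rcases hcond with h | ⟨h, _⟩
        · by_cases hb : b = 0
          · simp [hb]
          · exact (h ((Submodule.smul_mem_iff _ hb).mp h1)).elim
        · simp [h]
      rw [h2, zero_add] at hmem
      exact hp ((Submodule.smul_mem_iff _ ha).mp hmem)
    set G : F → F → ℂ := fun y x => f0 (x - p.eval y) * (∏ i, f' i (x + (P' i - p).eval y)) *
      χ (Q.eval y) with hG
    set D : F → ℂ := fun x => 𝔼 y, G y x with hD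
    have hDb : Bd D := fun x => norm_avg_le_one _ fun y => mul_le_one' (mul_le_one' (hf0 _)
          (prod_bd _ fun i => hf'b i _)) (char_norm _ _).le
    -- PET
    have hL := dual_id χ p Q P' f0 f' (f 0) (hf 0) D (fun x => rfl)
    have hpet := H1 F hch (Option (Option (Fin m))) (by simp) D hDb p (hPd 0) (mf χ f0 f') (by
        rintro (_ | _ | i) x
        · simp only [mf]
          exact mul_le_one' (by simpa using hf0 x) (char_norm _ _).le
        · exact (char_norm _ _).le
        · simpa [mf] using hf'b i x) (mp Q P') (by
        rintro (_ | _ | i)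
        · simp [mp]
        · exact hQd
        · exact hP'd i) (by
        rintro (_ | _ | i)
        all_goals simp only [mp]
        · refine one_le_natDegree (by simp [hpdef, hP0]) ?_
          rw [sub_zero]
          intro h0
          exact hp (h0 ▸ Submodule.zero_mem _)
        · refine one_le_natDegree (by simp [hpdef, hP0, hQ0]) ?_
          rw [sub_ne_zero]
          intro h0
          rcases hcond with h | ⟨h, _⟩
          · exact h (h0 ▸ hpm)
          · exact hp (h0 ▸ h ▸ Submodule.zero_mem _)
        · refine one_le_natDegree (by simp [hpdef, hP0, hP'0]) ?_
          rw [sub_ne_zero]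
          intro h0
          exact hp (h0 ▸ Submodule.subset_span ⟨i, rfl⟩))
    -- degree lowering
    have hdl := H2 F χ hχ {H | ∃ (f0' : F → ℂ) (f'' : Fin m → F → ℂ) (b : F), Bd f0' ∧ (∀ i, Bd (f'' i)) ∧
        H = fun y x => f0' (x - p.eval y) * (∏ i, f'' i (x + (P' i - p).eval y)) * χ (b * Q.eval y)} ε
      (by
        rintro _ ⟨a0, a', b, h1, h2, rfl⟩ _ ⟨c0, c', e, h3, h4, rfl⟩
        refine ⟨fun x => a0 x * conj (c0 x), fun i x => a' i x * conj (c' i x), b - e,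
          fun x => mul_le_one' (h1 x) (by simpa using h3 x),
          fun i x => mul_le_one' (h2 i x) (by simpa using h4 i x), ?_⟩
        ext y x
        simp only [sub_mul, ← char_mul_conj, map_mul (starRingEnd ℂ), prod_mul_distrib, map_prod]
        ring)
      (by
        rintro _ ⟨a0, a', b, h1, h2, rfl⟩ y x
        exact mul_le_one' (mul_le_one' (h1 _) (prod_bd _ fun i => h2 i _)) (char_norm _ _).le)
      hε0 hε1
      (by
        rintro _ ⟨a0, a', b, h1, h2, rfl⟩ a ha
        have := hIH a0 h1 a' h2 a b (Or.inl (hspan a b ha))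
        rw [← expect_prod_type] at this
        exact this)
      G (by
        intro t
        refine ⟨fun x => f0 (x + t), fun i x => f' i (x + t), 1, fun x => hf0 _, fun i x => hf'b i _, ?_⟩
        ext y x
        simp only [hG, one_mul]
        rw [show x + t - p.eval y = x - p.eval y + t by ring]
        congr 2
        refine prod_congr rfl fun i _ => ?_
        congr 1; ring) D (fun x => rfl)
    -- Fourier
    obtain ⟨a, ha⟩ := exists_fourier hχ hDb
    have hfour : ‖𝔼 x, D x * χ (a * x)‖ ≤ ε := by
      have := hIH f0 hf0 f' hf'b a 1 (by
        by_cases ha0 : a = 0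
        · rcases hcond with h | ⟨h, h'⟩
          · left
            intro h2
            apply h
            simp only [ha0, one_smul, zero_smul, add_zero] at h2
            exact hsub h2
          · right
            simp [h, ha0, h']
        · exact Or.inl (hspan a 1 ha0))
      refine le_trans (le_of_eq ?_) this
      congr 1
      refine expect_congr rfl fun x _ => ?_
      rw [← mul_expect, mul_comm]
      simp only [hD, hG, one_mul]
    have hg1 : g 1 D + ε ≤ 2 * ε := by
      have : ‖𝔼 x, D x * χ (a * x)‖ ^ 2 ≤ ε := by
        have := norm_nonneg (𝔼 x, D x * χ (a * x))
        nlinarith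
      linarith
    have h2 : g (s + 1) D ^ K2 ≤ (2 * C2) * ε := hdl.trans (by
      have := mul_le_mul_of_nonneg_left hg1 hC2
      linarith)
    have hfin := numeric hK0 hK2 hC1 (by positivity : 0 ≤ 2 * C2) (norm_nonneg _) (g_nonneg _ _)
      hu0 hu1 hε0 hpet h2 hεK
    rw [pow_mul]
    refine le_trans (pow_le_pow_left₀ (by positivity) ?_ _) (hfin.trans (le_of_eq ?_))
    · refine le_trans (le_of_eq ?_) hL
      congr 2
      refine expect_congr rfl fun x _ => expect_congr rfl fun y _ => ?_
      rw [Fin.prod_univ_succ]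
      rfl
    · rw [hu]; ring
end Pel

namespace Pel
set_option linter.unusedSectionVars false
open Finset
open scoped BigOperators ComplexConjugate

lemma exists_prim (F : Type) [Field F] [Fintype F] : ∃ χ : AddChar F ℂ, χ.IsPrimitive := by
  obtain ⟨ψ, hψ⟩ := AddChar.exists_apply_ne_zero.mpr (one_ne_zero (α := F))
  refine ⟨ψ, AddChar.IsPrimitive.of_ne_one ?_⟩
  rintro rfl
  simp at hψ

lemma li_diff {F : Type} [Field F] {m : ℕ} {P : Fin (m + 1) → F[X]} (h : LinearIndependent F P) :
    LinearIndependent F (fun i : Fin m => P i.succ - P 0) := by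
  rw [Fintype.linearIndependent_iff] at h ⊢
  intro a ha i
  have := h (Fin.cons (-∑ i, a i) a) (by
    rw [Fin.sum_univ_succ]
    simp only [Fin.cons_zero, Fin.cons_succ]
    rw [← ha]
    simp only [smul_sub, sum_sub_distrib, ← sum_smul, neg_smul]
    abel) i.succ
  simpa using this

lemma final_ind (d m : ℕ) : ∃ (K : ℕ) (C : ℝ), 1 ≤ K ∧ 0 ≤ C ∧
    ∀ (F : Type) [Field F] [Fintype F] (_ : Ch F (d + 1))
      (P : Fin m → F[X]) (_ : ∀ i, (P i).coeff 0 = 0) (_ : ∀ i, (P i).natDegree ≤ d)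
      (_ : LinearIndependent F P) (f0 : F → ℂ) (_ : Bd f0) (f : Fin m → F → ℂ) (_ : ∀ i, Bd (f i)),
      ‖(𝔼 x, 𝔼 y, f0 x * (∏ i, f i (x + (P i).eval y))) - (𝔼 x, f0 x) * ∏ i, 𝔼 x, f i x‖ ^ K ≤
        C / Fintype.card F := by
  induction m with
  | zero =>
    refine ⟨1, 0, le_rfl, le_rfl, ?_⟩
    intro F _ _ _ P _ _ _ f0 _ f _
    simp
  | succ m ih =>
    obtain ⟨K1, C1, hK1, hC1, H1⟩ := main_ind d (m + 1)
    obtain ⟨K2, C2, hK2, hC2, H2⟩ := ih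
    refine ⟨K1 * K2, 2 ^ (K1 * K2) * ((2 ^ K1 * C1) ^ K2 + C2 ^ K1), ?_, by positivity, ?_⟩
    · exact Nat.mul_pos hK1 hK2
    intro F _ _ hch P hP0 hPd hPi f0 hf0 f hf
    obtain ⟨χ, hχ⟩ := exists_prim F
    set μ : ℂ := 𝔼 x, f0 x with hμ
    have hμ1 : ‖μ‖ ≤ 1 := norm_avg_le_one _ hf0
    have h1 := H1 F χ hχ hch P hP0 hPd hPi 0 (by simp) (by simp) (fun x => (f0 x - μ) / 2) (by
      intro x
      simp only [norm_div, Complex.norm_ofNat]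
      have := norm_sub_le (f0 x) μ
      have := hf0 x
      rw [div_le_one (by norm_num)]
      linarith) f hf (Or.inr ⟨rfl, by
        rw [← expect_div, expect_sub_distrib, Fintype.expect_const, ← hμ]; simp⟩)
    have h2 := H2 F hch (fun i : Fin m => P i.succ - P 0) (by simp [hP0])
      (fun i => (natDegree_sub_le _ _).trans (max_le (hPd _) (hPd _))) (li_diff hPi) (f 0) (hf 0)
      (fun i => f i.succ) (fun i => hf _)
    set A := 𝔼 x, 𝔼 y, (f0 x - μ) / 2 * (∏ i, f i (x + (P i).eval y)) * χ ((0 : F[X]).eval y) with hA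
    set B := (𝔼 x, 𝔼 y, f 0 x * ∏ i : Fin m, f i.succ (x + (P i.succ - P 0).eval y)) -
      (𝔼 x, f 0 x) * ∏ i : Fin m, 𝔼 x, f i.succ x with hB
    have hB' : B = (𝔼 x, 𝔼 y, ∏ i, f i (x + (P i).eval y)) - ∏ i, 𝔼 x, f i x := by
      rw [hB, Fin.prod_univ_succ (fun i => 𝔼 x, f i x)]
      congr 1
      rw [expect_comm, expect_comm (f := fun x y => ∏ i, f i (x + (P i).eval y))]
      refine expect_congr rfl fun y _ => ?_
      have := avg_shift ((P 0).eval y) (fun x => f 0 x *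
        ∏ i : Fin m, f i.succ (x + (P i.succ - P 0).eval y))
      rw [← this]
      refine expect_congr rfl fun x _ => ?_
      rw [Fin.prod_univ_succ]
      congr 1
      refine prod_congr rfl fun i _ => ?_
      congr 1
      rw [eval_sub]; ring
    have hdec : (𝔼 x, 𝔼 y, f0 x * (∏ i, f i (x + (P i).eval y))) - μ * ∏ i, 𝔼 x, f i x =
        2 * A + μ * B := by
      rw [hB', hA, mul_sub, mul_expect, mul_expect, ← add_sub_assoc, ← expect_add_distrib]
      congr 1
      refine expect_congr rfl fun x _ => ?_
      rw [mul_expect, mul_expect, ← expect_add_distrib]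
      refine expect_congr rfl fun y _ => ?_
      simp only [eval_zero, AddChar.map_zero_eq_one]
      ring
    rw [hdec]
    have hn : ‖2 * A + μ * B‖ ≤ 2 * ‖A‖ + ‖B‖ := by
      refine (norm_add_le _ _).trans ?_
      rw [norm_mul, norm_mul]
      have := mul_le_of_le_one_left (norm_nonneg B) hμ1
      simpa using this
    have hq : (1 : ℝ) ≤ Fintype.card F := by exact_mod_cast Fintype.card_pos
    rw [div_eq_mul_one_div] at h1 h2 ⊢
    set u : ℝ := 1 / Fintype.card F with hu
    have hu1 : u ≤ 1 := by rw [hu, div_le_one (by linarith)]; exact hq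
    have hu0 : 0 ≤ u := by positivity
    have hp1 : u ^ K1 ≤ u := pow_le_of_le_one hu0 hu1 (by omega)
    have hp2 : u ^ K2 ≤ u := pow_le_of_le_one hu0 hu1 (by omega)
    have hA1 : (2 * ‖A‖) ^ (K1 * K2) ≤ (2 ^ K1 * C1) ^ K2 * u := by
      rw [pow_mul, mul_pow]
      calc _ ≤ (2 ^ K1 * (C1 * u)) ^ K2 := by gcongr
        _ = (2 ^ K1 * C1) ^ K2 * u ^ K2 := by ring
        _ ≤ _ := by gcongr
    have hB1 : ‖B‖ ^ (K1 * K2) ≤ C2 ^ K1 * u := by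
      rw [mul_comm, pow_mul]
      calc _ ≤ (C2 * u) ^ K1 := by gcongr
        _ = C2 ^ K1 * u ^ K1 := by ring
        _ ≤ _ := by gcongr
    calc _ ≤ (2 * ‖A‖ + ‖B‖) ^ (K1 * K2) := by gcongr
      _ ≤ 2 ^ (K1 * K2 - 1) * ((2 * ‖A‖) ^ (K1 * K2) + ‖B‖ ^ (K1 * K2)) :=
        add_pow_le (by positivity) (norm_nonneg _) _
      _ ≤ 2 ^ (K1 * K2) * ((2 ^ K1 * C1) ^ K2 * u + C2 ^ K1 * u) := by
        gcongr
        · norm_num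
        · exact Nat.sub_le _ _
      _ = _ := by ring

lemma li_reduce (m : ℕ) (P : Fin m → ℤ[X])
    (hind : LinearIndependent ℚ fun i => (P i).map (Int.castRingHom ℚ)) :
    ∃ c : ℕ, ∀ (F : Type) [Field F], c < ringChar F →
      LinearIndependent F fun i => (P i).map (Int.castRingHom F) := by
  classical
  obtain ⟨d, hd⟩ : ∃ d, ∀ i, (P i).natDegree < d := ⟨(univ.sup fun i => (P i).natDegree) + 1,
    fun i => Nat.lt_succ_of_le (le_sup (f := fun i => (P i).natDegree) (mem_univ i))⟩
  set A : Matrix (Fin m) (Fin d) ℤ := fun i j => (P i).coeff j with hA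
  have hdet : (A * A.transpose).det ≠ 0 := by
    intro h0
    obtain ⟨v, hv0, hv⟩ := Matrix.exists_vecMul_eq_zero_iff.mpr h0
    apply hv0
    have h1 : Matrix.vecMul v A = 0 := by
      have h2 : Matrix.vecMul v A ⬝ᵥ Matrix.vecMul v A = 0 := by
        have h3 : Matrix.vecMul v (A * A.transpose) ⬝ᵥ v = 0 := by rw [hv, zero_dotProduct]
        rw [← Matrix.vecMul_vecMul, ← Matrix.dotProduct_mulVec, Matrix.mulVec_transpose] at h3
        exact h3
      exact dotProduct_self_eq_zero.mp h2
    have h2 : ∑ i, v i • P i = 0 := by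
      ext j
      rw [finsetSum_coeff, coeff_zero]
      by_cases hj : j < d
      · have := congrFun h1 ⟨j, hj⟩
        simpa [Matrix.vecMul, dotProduct, hA] using this
      · refine sum_eq_zero fun i _ => ?_
        have := hd i
        rw [coeff_smul, coeff_eq_zero_of_natDegree_lt (by omega), smul_zero]
    have h3 : ∑ i, (v i : ℚ) • (P i).map (Int.castRingHom ℚ) = 0 := by
      have := congrArg (Polynomial.map (Int.castRingHom ℚ)) h2
      rw [Polynomial.map_sum, Polynomial.map_zero] at this
      rw [← this]
      refine sum_congr rfl fun i _ => ?_
      rw [smul_eq_C_mul, smul_eq_C_mul, Polynomial.map_mul, map_C]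
      rfl
    ext i
    have := Fintype.linearIndependent_iff.mp hind _ h3 i
    simpa using this
  refine ⟨(A * A.transpose).det.natAbs, ?_⟩
  intro F _ hc
  have hdF : ((A.map (Int.castRingHom F)) * (A.map (Int.castRingHom F)).transpose).det ≠ 0 := by
    rw [← Matrix.transpose_map, ← Matrix.map_mul]
    have := (Int.castRingHom F).map_det (A * A.transpose)
    rw [RingHom.mapMatrix_apply] at this
    rw [← this]
    intro h0
    rw [eq_intCast, CharP.intCast_eq_zero_iff F (ringChar F)] at h0
    have h1 := Int.natAbs_dvd_natAbs.mpr h0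
    rw [Int.natAbs_natCast] at h1
    have := Nat.le_of_dvd (Int.natAbs_pos.mpr hdet) h1
    omega
  rw [Fintype.linearIndependent_iff]
  intro v hv
  have h1 : Matrix.vecMul v (A.map (Int.castRingHom F)) = 0 := by
    ext j
    have := congrArg (fun Q : F[X] => Q.coeff j) hv
    simp only [finsetSum_coeff, coeff_smul, coeff_map, coeff_zero] at this
    exact this
  have h2 : v = 0 := Matrix.eq_zero_of_vecMul_eq_zero hdF (by
    rw [← Matrix.vecMul_vecMul, h1, Matrix.zero_vecMul])
  intro i
  rw [h2]; rfl

lemma count_eq {F : Type} [Field F] [Fintype F] [DecidableEq F] {m : ℕ} (P : Fin m → ℤ[X]) (A : Finset F) :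
    ((Set.ncard {p : F × F | p.1 ∈ A ∧ ∀ i, p.1 + aeval p.2 (P i) ∈ A} : ℕ) : ℂ) =
      (Fintype.card F : ℂ) ^ 2 * 𝔼 x, 𝔼 y, (if x ∈ A then (1 : ℂ) else 0) *
        ∏ i, (if x + ((P i).map (Int.castRingHom F)).eval y ∈ A then (1 : ℂ) else 0) := by
  have hq : (Fintype.card F : ℂ) ≠ 0 := by exact_mod_cast Fintype.card_ne_zero
  have e : ∀ i (y : F), aeval y (P i) = ((P i).map (Int.castRingHom F)).eval y := by
    intro i y
    rw [aeval_def, eval_map]; rfl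
  have h1 : {p : F × F | p.1 ∈ A ∧ ∀ i, p.1 + aeval p.2 (P i) ∈ A} =
      ↑((univ : Finset (F × F)).filter fun p => p.1 ∈ A ∧ ∀ i, p.1 + aeval p.2 (P i) ∈ A) := by
    ext p; simp
  rw [h1, Set.ncard_coe_finset, card_filter]
  simp only [Fintype.expect_eq_sum_div_card, ← sum_div]
  rw [div_div, ← sq, mul_div_cancel₀ _ (pow_ne_zero 2 hq), ← Fintype.sum_prod_type']
  push_cast
  refine sum_congr rfl fun p _ => ?_
  simp only [e]
  rw [Fintype.prod_boole, ite_and]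
  split_ifs <;> simp
end Pel

open Pel

/-- For linearly independent `P₁,…,Pₘ ∈ ℤ[y]` with zero constant term,
there exist `c, γ, C > 0` such that for every finite field `𝔽_q` of characteristic at
least `c` and every `A ⊆ 𝔽_q`,
`|#{(x,y) : x, x+P₁(y), …, x+Pₘ(y) ∈ A} − |A|^{m+1}/q^{m−1}| ≤ C·q^{2−(m+1)γ}`. -/
theorem statement1 (m : ℕ) (hm : 1 ≤ m) (P : Fin m → Polynomial ℤ)
    (hP0 : ∀ i, (P i).coeff 0 = 0)
    (hind : LinearIndependent ℚ fun i => (P i).map (Int.castRingHom ℚ)) :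
    ∃ c γ C : ℝ, 0 < c ∧ 0 < γ ∧ 0 < C ∧
      ∀ (F : Type) [Field F] [Fintype F], c ≤ (ringChar F : ℝ) →
        ∀ A : Finset F,
          |((Set.ncard {p : F × F |
                p.1 ∈ A ∧ ∀ i, p.1 + Polynomial.aeval p.2 (P i) ∈ A} : ℕ) : ℝ)
              - (A.card : ℝ) ^ (m + 1) / (Fintype.card F : ℝ) ^ (m - 1)|
            ≤ C * (Fintype.card F : ℝ) ^ ((2 : ℝ) - (m + 1 : ℝ) * γ) := by
  classical
  obtain ⟨d, hd⟩ : ∃ d, ∀ i, (P i).natDegree ≤ d := ⟨Finset.univ.sup fun i => (P i).natDegree,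
    fun i => Finset.le_sup (f := fun i => (P i).natDegree) (Finset.mem_univ i)⟩
  obtain ⟨c, hc⟩ := li_reduce m P hind
  obtain ⟨K, C, hK, hC, H⟩ := final_ind d m
  have hKpos : (0 : ℝ) < K := by exact_mod_cast hK
  refine ⟨c + d + 2, 1 / (K * (m + 1)), C ^ ((K : ℝ)⁻¹) + 1, by positivity, by positivity,
    by positivity, ?_⟩
  intro F _ _ hchar A
  have hchar' : c + d + 2 ≤ ringChar F := by exact_mod_cast hchar
  have hch : Ch F (d + 1) := by
    intro k h1 h2 h3
    rw [CharP.cast_eq_zero_iff F (ringChar F)] at h3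
    have := Nat.le_of_dvd h1 h3
    omega
  have h1 := H F hch (fun i => (P i).map (Int.castRingHom F)) (fun i => by simp [hP0])
    (fun i => (Polynomial.natDegree_map_le).trans (hd i)) (hc F (by omega))
    (fun x => if x ∈ A then 1 else 0) (fun x => by simp only; split_ifs <;> simp)
    (fun _ x => if x ∈ A then 1 else 0) (fun _ x => by simp only; split_ifs <;> simp)
  have hq : (0 : ℝ) < Fintype.card F := by exact_mod_cast Fintype.card_pos
  have hqC : (Fintype.card F : ℂ) ≠ 0 := by exact_mod_cast Fintype.card_ne_zero
  have hcnt := count_eq P A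
  set E := Finset.expect Finset.univ fun x : F => Finset.expect Finset.univ fun y : F =>
    (if x ∈ A then (1 : ℂ) else 0) *
        ∏ i, (if x + ((P i).map (Int.castRingHom F)).eval y ∈ A then (1 : ℂ) else 0) with hE
  have hA : (Finset.expect Finset.univ fun x : F => (if x ∈ A then (1 : ℂ) else 0)) =
      (A.card : ℂ) / Fintype.card F := by
    rw [Fintype.expect_eq_sum_div_card]; simp
  simp only [hA, Finset.prod_const, Finset.card_univ, Fintype.card_fin] at h1
  rw [← pow_succ'] at h1
  set N := Set.ncard {p : F × F | p.1 ∈ A ∧ ∀ i, p.1 + Polynomial.aeval p.2 (P i) ∈ A} with hN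
  have h2 : |(N : ℝ) - (A.card : ℝ) ^ (m + 1) / (Fintype.card F : ℝ) ^ (m - 1)| =
      (Fintype.card F : ℝ) ^ 2 * ‖E - ((A.card : ℂ) / Fintype.card F) ^ (m + 1)‖ := by
    rw [← Real.norm_eq_abs, ← Complex.norm_real]
    have : (((N : ℝ) - (A.card : ℝ) ^ (m + 1) / (Fintype.card F : ℝ) ^ (m - 1) : ℝ) : ℂ) =
        (Fintype.card F : ℂ) ^ 2 * (E - ((A.card : ℂ) / Fintype.card F) ^ (m + 1)) := by
      push_cast
      rw [hcnt, mul_sub]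
      congr 1
      obtain ⟨k, rfl⟩ := Nat.exists_eq_add_of_le' hm
      rw [Nat.add_sub_cancel, div_pow]
      field_simp
      ring
    rw [this, norm_mul]
    simp
  rw [h2]
  set x := ‖E - ((A.card : ℂ) / Fintype.card F) ^ (m + 1)‖ with hx
  have h3 : x ≤ (C / Fintype.card F) ^ ((K : ℝ)⁻¹) := by
    have h4 : ((C / Fintype.card F) ^ ((K : ℝ)⁻¹)) ^ K = C / Fintype.card F :=
      Real.rpow_inv_natCast_pow (by positivity) (by omega)
    rw [← h4] at h1
    exact (pow_le_pow_iff_left₀ (norm_nonneg _) (by positivity) (by omega)).mp h1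
  have h5 : (2 : ℝ) - (m + 1 : ℝ) * (1 / (K * (m + 1))) = 2 - (K : ℝ)⁻¹ := by
    field_simp
  rw [h5, Real.rpow_sub hq, Real.rpow_two]
  rw [Real.div_rpow hC hq.le] at h3
  have h6 : (0 : ℝ) < (Fintype.card F : ℝ) ^ ((K : ℝ)⁻¹) := by positivity
  calc _ ≤ (Fintype.card F : ℝ) ^ 2 * (C ^ ((K : ℝ)⁻¹) / (Fintype.card F : ℝ) ^ ((K : ℝ)⁻¹)) := by
        gcongr
    _ = C ^ ((K : ℝ)⁻¹) * ((Fintype.card F : ℝ) ^ 2 / (Fintype.card F : ℝ) ^ ((K : ℝ)⁻¹)) := by ring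
    _ ≤ _ := by gcongr; linarith
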